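/- Let G be a connected planar graph with n ≥ 2 vertices and m edges, and suppose that for some ε ∈ (1, 5/2] the average degree satisfies 2m/n = 9/2 − ε. Then the 2-surviving rate satisfies ρ₂(G) ≥ (2/9)ε − 1/n. -/

import Mathlib

/-- The set of vertices on fire after `t` fire-spread rounds, when the fire breaks out
at `v` and the firefighters protect the vertices of `P s` in round `s + 1` (protection
happens just before the `s`-th spread step and is permanent). -/
def burnedSet {V : Type*} (G : SimpleGraph V) (v : V) (P : ℕ → Set V) : ℕ → Set V
  | 0 => {v}
  | t + 1 => burnedSet G v P t ∪
      {w | (∃ u ∈ burnedSet G v P t, G.Adj u w) ∧ ∀ s ≤ t, w ∉ P s}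

/-- A strategy `P` is valid for the per-round budgets `b` if in each round it protects
at most `b t` vertices, none of which are already on fire. -/
def ValidStrategy {V : Type*} (G : SimpleGraph V) (b : ℕ → ℕ) (v : V) (P : ℕ → Set V) : Prop :=
  ∀ t, (P t).Finite ∧ (P t).ncard ≤ b t ∧ Disjoint (P t) (burnedSet G v P t)

/-- `sn G b v` is the maximum number of vertices that can be saved (i.e. that never
catch fire) when the fire breaks out at `v` and the firefighters may protect at most
`b t` vertices in round `t + 1`. -/
noncomputable def sn {V : Type*} (G : SimpleGraph V) (b : ℕ → ℕ) (v : V) : ℕ :=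
  sSup {m | ∃ P, ValidStrategy G b v P ∧
    m = Nat.card {w : V | ∀ t, w ∉ burnedSet G v P t}}

/-- The surviving rate of `G` with per-round budgets `b` : the expected fraction of
vertices that can be saved when the starting vertex is chosen uniformly at random. -/
noncomputable def survivingRate {V : Type*} [Fintype V] (G : SimpleGraph V) (b : ℕ → ℕ) : ℝ :=
  (∑ v : V, (sn G b v : ℝ)) / (Fintype.card V : ℝ) ^ 2

/-- A plane embedding of a simple graph: vertices are points of the plane and edges are
simple arcs between their endpoints, such that arcs avoid all other vertices and two
arcs of distinct edges meet only in common endpoints. -/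
structure PlaneEmbedding {V : Type*} (G : SimpleGraph V) where
  pos : V → ℝ × ℝ
  arc : V → V → ℝ → ℝ × ℝ
  pos_inj : Function.Injective pos
  arc_cont : ∀ ⦃u v⦄, G.Adj u v → Continuous (arc u v)
  arc_injOn : ∀ ⦃u v⦄, G.Adj u v → Set.InjOn (arc u v) (Set.Icc 0 1)
  arc_zero : ∀ ⦃u v⦄, G.Adj u v → arc u v 0 = pos u
  arc_one : ∀ ⦃u v⦄, G.Adj u v → arc u v 1 = pos v
  arc_symm : ∀ ⦃u v⦄, G.Adj u v → ∀ t, arc v u t = arc u v (1 - t)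
  arc_avoid : ∀ ⦃u v⦄, G.Adj u v → ∀ w : V, pos w ∉ arc u v '' Set.Ioo 0 1
  arc_meet : ∀ ⦃u v x y⦄, G.Adj u v → G.Adj x y → s(u, v) ≠ s(x, y) →
      arc u v '' Set.Icc 0 1 ∩ arc x y '' Set.Icc 0 1 ⊆
        ({pos u, pos v} : Set (ℝ × ℝ)) ∩ {pos x, pos y}

/-- A graph is planar if it admits a plane embedding. -/
def IsPlanar {V : Type*} (G : SimpleGraph V) : Prop :=
  Nonempty (PlaneEmbedding G)

section Helpers
open Finset

/-- Parity of crossings to the left of the upper triangle of the cell `(i, j)`. -/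
def gIB (c : Sym2 (ℕ × ℕ) → ZMod 2) (i j : ℕ) : ZMod 2 :=
  ∑ k ∈ range (i + 1), c s((k, j), (k, j + 1)) + ∑ k ∈ range i, c s((k, j), (k + 1, j + 1))

/-- Parity of crossings to the left of the lower triangle of the cell `(i, j)`. -/
def gIA (c : Sym2 (ℕ × ℕ) → ZMod 2) (i j : ℕ) : ZMod 2 :=
  gIB c i j + c s((i, j), (i + 1, j + 1))

lemma gIB_succ (c : Sym2 (ℕ × ℕ) → ZMod 2) (i j : ℕ) :
    gIB c (i + 1) j = gIA c i j + c s((i + 1, j), (i + 1, j + 1)) := by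
  unfold gIA gIB
  rw [sum_range_succ _ (i + 1), sum_range_succ (fun k => c s((k, j), (k + 1, j + 1))) i]
  ring

lemma z2_self (a : ZMod 2) : a + a = 0 := CharTwo.add_self_eq_zero a

/-- The degree parity of the chain `c` at the vertex `(i+1, j+1)`. -/
def gdeg (c : Sym2 (ℕ × ℕ) → ZMod 2) (i j : ℕ) : ZMod 2 :=
  c s((i, j + 1), (i + 1, j + 1)) + c s((i + 1, j + 1), (i + 2, j + 1)) +
  c s((i + 1, j), (i + 1, j + 1)) + c s((i + 1, j + 1), (i + 1, j + 2)) +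
  c s((i, j), (i + 1, j + 1)) + c s((i + 1, j + 1), (i + 2, j + 2))

lemma gH_rel (c : Sym2 (ℕ × ℕ) → ZMod 2) (hev : ∀ i j, gdeg c i j = 0)
    (h0 : ∀ j q, c s((0, j), q) = 0) (i j : ℕ) :
    gIA c i (j + 1) + gIB c i j = c s((i, j + 1), (i + 1, j + 1)) := by
  induction i with
  | zero => simp [gIA, gIB, h0]
  | succ i ih =>
    have h1 := gIB_succ c i (j + 1)
    have h2 := gIB_succ c i j
    have h3 := hev i j
    have e1 : gIA c (i + 1) (j + 1) = gIB c (i + 1) (j + 1) + c s((i + 1, j + 1), (i + 2, j + 2)) := rfl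
    have e2 : gIA c i j = gIB c i j + c s((i, j), (i + 1, j + 1)) := rfl
    rw [e1, h1, h2, e2]
    unfold gdeg at h3
    have k1 := z2_self (c s((i + 1, j + 1), (i + 2, j + 1)))
    have k2 := z2_self (c s((i, j + 1), (i + 1, j + 1)))
    show _ = c s((i + 1, j + 1), (i + 2, j + 1))
    linear_combination h3 + ih - k1

/-- indicator chain of an edge -/
def gone (e : Sym2 (ℕ × ℕ)) : Sym2 (ℕ × ℕ) → ZMod 2 := fun f => if f = e then 1 else 0

lemma gIB_add (c d : Sym2 (ℕ × ℕ) → ZMod 2) (i j : ℕ) : gIB (c + d) i j = gIB c i j + gIB d i j := by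
  unfold gIB; simp only [Pi.add_apply, sum_add_distrib]; ring

lemma gIA_add (c d : Sym2 (ℕ × ℕ) → ZMod 2) (i j : ℕ) : gIA (c + d) i j = gIA c i j + gIA d i j := by
  unfold gIA; rw [gIB_add]; simp only [Pi.add_apply]; ring

lemma gIB_H (a b i j : ℕ) : gIB (gone s((a, b), (a + 1, b))) i j = 0 := by
  unfold gIB gone
  rw [sum_eq_zero, sum_eq_zero, add_zero]
  · intro k _; rw [if_neg]; simp [Prod.ext_iff]; omega
  · intro k _; rw [if_neg]; simp [Prod.ext_iff]; omega

lemma gIB_V (a b i j : ℕ) : gIB (gone s((a, b), (a, b + 1))) i j = if j = b ∧ a ≤ i then 1 else 0 := by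
  unfold gIB gone
  have : ∀ k, (s((k, j), (k, j + 1)) = s((a, b), (a, b + 1))) ↔ (k = a ∧ j = b) := by
    intro k; simp [Prod.ext_iff]; omega
  simp only [this]
  rw [sum_eq_zero (s := range i), add_zero]
  · by_cases hj : j = b
    · simp [hj, Finset.sum_ite_eq']
    · simp [hj]
  · intro k _; rw [if_neg]; simp [Prod.ext_iff]; omega

lemma gIB_D (a b i j : ℕ) : gIB (gone s((a, b), (a + 1, b + 1))) i j = if j = b ∧ a < i then 1 else 0 := by
  unfold gIB gone
  have : ∀ k, (s((k, j), (k + 1, j + 1)) = s((a, b), (a + 1, b + 1))) ↔ (k = a ∧ j = b) := by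
    intro k; simp [Prod.ext_iff]; omega
  simp only [this]
  rw [sum_eq_zero (s := range (i + 1)), zero_add]
  · by_cases hj : j = b
    · simp [hj, Finset.sum_ite_eq']
    · simp [hj]
  · intro k _; rw [if_neg]; simp [Prod.ext_iff]; omega

/-- boundary of lower triangle -/
def gbA (a b : ℕ) : Sym2 (ℕ × ℕ) → ZMod 2 :=
  gone s((a, b), (a + 1, b)) + gone s((a + 1, b), (a + 1, b + 1)) + gone s((a, b), (a + 1, b + 1))
/-- boundary of upper triangle -/
def gbB (a b : ℕ) : Sym2 (ℕ × ℕ) → ZMod 2 :=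
  gone s((a, b), (a, b + 1)) + gone s((a, b + 1), (a + 1, b + 1)) + gone s((a, b), (a + 1, b + 1))

lemma gIA_bA (a b i j : ℕ) : gIA (gbA a b) i j = if i = a ∧ j = b then 1 else 0 := by
  unfold gIA gbA
  rw [gIB_add, gIB_add, gIB_H, gIB_V, gIB_D]
  have h1 : gone s((a, b), (a + 1, b)) s((i, j), (i + 1, j + 1)) = 0 := by
    unfold gone; rw [if_neg]; simp [Prod.ext_iff]; omega
  have h2 : gone s((a + 1, b), (a + 1, b + 1)) s((i, j), (i + 1, j + 1)) = 0 := by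
    unfold gone; rw [if_neg]; simp [Prod.ext_iff]; omega
  have h3 : gone s((a, b), (a + 1, b + 1)) s((i, j), (i + 1, j + 1)) = if i = a ∧ j = b then 1 else 0 := by
    unfold gone; congr 1; simp [Prod.ext_iff]; omega
  simp only [Pi.add_apply, h1, h2, h3]
  simp only [show (a + 1 ≤ i) = (a < i) from rfl]
  rw [zero_add, z2_self]; simp

lemma gIB_bB (a b i j : ℕ) : gIB (gbB a b) i j = if i = a ∧ j = b then 1 else 0 := by
  unfold gbB
  rw [gIB_add, gIB_add, gIB_H, gIB_V, gIB_D]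
  rcases lt_trichotomy i a with h | h | h <;> by_cases hj : j = b
  · rw [if_neg (by omega), if_neg (by omega), if_neg (by omega)]; simp
  · rw [if_neg (by omega), if_neg (by omega), if_neg (by omega)]; simp
  · rw [if_pos (by omega), if_neg (by omega), if_pos (by omega)]; simp
  · rw [if_neg (by omega), if_neg (by omega), if_neg (by omega)]; simp
  · rw [if_pos (by omega), if_pos (by omega), if_neg (by omega)]; simp [z2_self]
  · rw [if_neg (by omega), if_neg (by omega), if_neg (by omega)]; simp

lemma gIA_bB (a b i j : ℕ) : gIA (gbB a b) i j = 0 := by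
  unfold gIA
  rw [gIB_bB]
  unfold gbB
  have h1 : gone s((a, b), (a, b + 1)) s((i, j), (i + 1, j + 1)) = 0 := by
    unfold gone; rw [if_neg]; simp [Prod.ext_iff]; omega
  have h2 : gone s((a, b + 1), (a + 1, b + 1)) s((i, j), (i + 1, j + 1)) = 0 := by
    unfold gone; rw [if_neg]; simp [Prod.ext_iff]; omega
  have h3 : gone s((a, b), (a + 1, b + 1)) s((i, j), (i + 1, j + 1)) = if i = a ∧ j = b then 1 else 0 := by
    unfold gone; congr 1; simp [Prod.ext_iff]; omega
  simp only [Pi.add_apply, h1, h2, h3, zero_add, z2_self]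

lemma gIA_zero (i j : ℕ) : gIA 0 i j = 0 := by simp [gIA, gIB]
lemma gIB_zero (i j : ℕ) : gIB 0 i j = 0 := by simp [gIB]

/-- 4-adjacency on the grid -/
def gAdj (p q : ℕ × ℕ) : Prop :=
  q = (p.1 + 1, p.2) ∨ q = (p.1, p.2 + 1) ∨ p = (q.1 + 1, q.2) ∨ p = (q.1, q.2 + 1)

lemma gAdj_symm {p q : ℕ × ℕ} (h : gAdj p q) : gAdj q p := by
  unfold gAdj at *; tauto

lemma gside_step (c : Sym2 (ℕ × ℕ) → ZMod 2) (hev : ∀ i j, gdeg c i j = 0)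
    (h0 : ∀ j q, c s((0, j), q) = 0) {p q : ℕ × ℕ} (h : gAdj p q)
    (hp : ∀ r, c s(p, r) = 0) (hq : ∀ r, c s(q, r) = 0) :
    gIA c p.1 p.2 = gIA c q.1 q.2 := by
  have right : ∀ i j, (∀ r, c s((i + 1, j), r) = 0) → gIA c i j = gIA c (i + 1) j := by
    intro i j hr
    have e1 : gIA c (i + 1) j = gIB c (i + 1) j + c s((i + 1, j), (i + 2, j + 1)) := rfl
    rw [e1, gIB_succ, hr, hr]; simp
  have up : ∀ i j, (∀ r, c s((i, j), r) = 0) → (∀ r, c s((i, j + 1), r) = 0) →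
      gIA c i j = gIA c i (j + 1) := by
    intro i j hr hr'
    have := gH_rel c hev h0 i j
    rw [hr'] at this
    have e1 : gIA c i j = gIB c i j + c s((i, j), (i + 1, j + 1)) := rfl
    rw [e1, hr, add_zero]
    have := eq_neg_of_add_eq_zero_left this
    rw [this, ZMod.neg_eq_self_mod_two]
  obtain ⟨i, j⟩ := p
  obtain ⟨a, b⟩ := q
  rcases h with h | h | h | h <;> simp only [Prod.mk.injEq] at h <;> obtain ⟨rfl, rfl⟩ := h
  · exact right _ _ hq
  · exact up _ _ hp hq
  · exact (right _ _ hp).symm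
  · exact (up _ _ hq hp).symm

lemma sn_ge {V : Type} [Fintype V] (G : SimpleGraph V) (b : ℕ → ℕ) (v : V) (P : ℕ → Set V)
    (hP : ValidStrategy G b v P) (S : Finset V) (hS : ∀ w ∈ S, ∀ t, w ∉ burnedSet G v P t) :
    S.card ≤ sn G b v := by
  have h1 : S.card ≤ Nat.card {w : V | ∀ t, w ∉ burnedSet G v P t} := by
    have : (S : Set V) ⊆ {w : V | ∀ t, w ∉ burnedSet G v P t} := fun w hw => hS w hw
    have h := Set.ncard_le_ncard this (Set.toFinite _)
    rwa [Set.ncard_coe_finset] at h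
  refine h1.trans (le_csSup ⟨Fintype.card V, ?_⟩ ⟨P, hP, rfl⟩)
  rintro m ⟨P, -, rfl⟩
  rw [← Nat.card_eq_fintype_card]
  exact Nat.card_le_card_of_injective _ Subtype.val_injective

lemma burned_dist {V : Type} (G : SimpleGraph V) (hc : G.Connected) (v : V) (P : ℕ → Set V) (t : ℕ) :
    ∀ u ∈ burnedSet G v P t, G.dist v u ≤ t := by
  induction t with
  | zero => intro u hu; simp only [burnedSet, Set.mem_singleton_iff] at hu; subst hu; simp
  | succ t ih =>
    intro u hu
    rcases hu with hu | ⟨⟨w, hw, ha⟩, -⟩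
    · exact (ih u hu).trans (Nat.le_succ t)
    · have := ih w hw
      have h2 : G.dist v u ≤ G.dist v w + G.dist w u := hc.dist_triangle
      rw [SimpleGraph.dist_eq_one_iff_adj.mpr ha] at h2
      omega

/-- ancestors -/
def anc {V : Type} (f : V → V) (a : V) : Set V := {w | ∃ k, f^[k] a = w}

lemma anc_unique {V : Type} (G : SimpleGraph V) (v : V) (f : V → V) (h0 : f v = v)
    (h1 : ∀ u, u ≠ v → G.dist v (f u) + 1 = G.dist v u) (a : V) {x y : V}
    (hx : x ∈ anc f a) (hy : y ∈ anc f a) (h : G.dist v x = G.dist v y) : x = y := by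
  have fix : ∀ k, f^[k] v = v := fun k => Function.iterate_fixed h0 k
  have mono : ∀ k u, f^[k] u = u ∨ G.dist v (f^[k] u) < G.dist v u := by
    intro k
    induction k with
    | zero => intro u; left; rfl
    | succ k ih =>
      intro u
      by_cases hu : u = v
      · left; rw [hu, fix]
      · right
        rw [Function.iterate_succ_apply]
        have := h1 u hu
        rcases ih (f u) with h | h
        · rw [h]; omega
        · omega
  obtain ⟨k, rfl⟩ := hx
  obtain ⟨l, rfl⟩ := hy
  rcases le_total k l with hkl | hkl
  · obtain ⟨d, rfl⟩ := Nat.exists_eq_add_of_le hkl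
    rw [add_comm, Function.iterate_add_apply] at h ⊢
    rcases mono d (f^[k] a) with h' | h'
    · exact h'.symm
    · omega
  · obtain ⟨d, rfl⟩ := Nat.exists_eq_add_of_le hkl
    rw [add_comm, Function.iterate_add_apply] at h ⊢
    rcases mono d (f^[l] a) with h' | h'
    · exact h'
    · omega

lemma exists_P0 {V : Type} [Fintype V] (T W : Set V) (hWT : W ⊆ T) (hW : W.ncard ≤ 2)
    (hT : T.ncard ≤ 3) : ∃ P, W ⊆ P ∧ P ⊆ T ∧ P.ncard ≤ 2 ∧ (T \ P).Subsingleton := by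
  classical
  by_cases h : T.ncard ≤ 2
  · exact ⟨T, hWT, le_rfl, h, by simp⟩
  · obtain ⟨P, h1, h2, h3⟩ := Set.exists_subsuperset_card_eq hWT hW (by omega : 2 ≤ T.ncard)
    refine ⟨P, h1, h2, h3.le, ?_⟩
    have := Set.ncard_diff_add_ncard_of_subset h2 (Set.toFinite _)
    exact Set.ncard_le_one_iff_subsingleton.mp (by omega)

lemma fire_wall {V : Type} [Fintype V] (G : SimpleGraph V) (hc : G.Connected) (v : V) (Z : Set V)
    (hZ : ∀ z ∈ Z, ∀ y, G.Adj z y → y ∈ Z ∨ y = v)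
    (h3 : {w | G.Adj v w ∧ w ∉ Z}.ncard ≤ 3) (f : V → V) (hf0 : f v = v)
    (hf1 : ∀ u, u ≠ v → G.dist v (f u) + 1 = G.dist v u) (a b : V) :
    ∃ (X : Set V) (S : Finset V), X.Subsingleton ∧ S.card ≤ sn G (fun _ => 2) v ∧
      ∀ (σ : V → ZMod 2) (l : ZMod 2),
        (∀ u w, G.Adj u w → u ∉ anc f a ∪ anc f b → w ∉ anc f a ∪ anc f b → σ u = σ w) →
        (∀ x ∈ X, σ x = l) →
        ∀ u, u ≠ v → u ∉ Z → (u ∈ anc f a ∪ anc f b ∨ σ u ≠ l) → u ∈ S := by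
  classical
  set Wd : ℕ → Set V := fun t => {w | w ∈ anc f a ∪ anc f b ∧ w ∉ Z ∧ G.dist v w = t + 1} with hWd
  have hWcard : ∀ t, (Wd t).ncard ≤ 2 := by
    intro t
    have : Wd t ⊆ (Wd t ∩ anc f a) ∪ (Wd t ∩ anc f b) := by
      intro w hw
      rcases hw.1 with h | h
      · exact Or.inl ⟨hw, h⟩
      · exact Or.inr ⟨hw, h⟩
    have s1 : ∀ a, (Wd t ∩ anc f a).ncard ≤ 1 := by
      intro a
      apply Set.ncard_le_one_iff_subsingleton.mpr
      intro x hx y hy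
      exact anc_unique G v f hf0 hf1 a hx.2 hy.2 (by rw [hx.1.2.2, hy.1.2.2])
    calc (Wd t).ncard ≤ ((Wd t ∩ anc f a) ∪ (Wd t ∩ anc f b)).ncard :=
          Set.ncard_le_ncard this (Set.toFinite _)
      _ ≤ _ := Set.ncard_union_le _ _
      _ ≤ 2 := by have := s1 a; have := s1 b; omega
  set T : Set V := {w | G.Adj v w ∧ w ∉ Z} with hT
  have hWT : Wd 0 ⊆ T := by
    intro w hw
    exact ⟨SimpleGraph.dist_eq_one_iff_adj.mp hw.2.2, hw.2.1⟩
  obtain ⟨P0, hWP, hPT, hPc, hsub⟩ := exists_P0 T (Wd 0) hWT (hWcard 0) h3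
  set P : ℕ → Set V := fun t => if t = 0 then P0 else Wd t with hP
  have hPdist : ∀ t, ∀ w ∈ P t, G.dist v w = t + 1 := by
    intro t w hw
    by_cases h : t = 0
    · simp only [hP, h, if_true] at hw
      rw [h, SimpleGraph.dist_eq_one_iff_adj.mpr (hPT hw).1]
    · simp only [hP, h, if_false] at hw
      exact hw.2.2
  have hWP' : ∀ t, Wd t ⊆ P t := by
    intro t
    by_cases h : t = 0
    · simp only [hP, h, if_true]; exact hWP
    · simp only [hP, h, if_false]; exact le_rfl
  have hvalid : ValidStrategy G (fun _ => 2) v P := by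
    intro t
    refine ⟨Set.toFinite _, ?_, ?_⟩
    · by_cases h : t = 0
      · simp only [hP, h, if_true]; exact hPc
      · simp only [hP, h, if_false]; exact hWcard t
    · rw [Set.disjoint_left]
      intro w hw hb
      have := hPdist t w hw
      have := burned_dist G hc v P t w hb
      omega
  refine ⟨T \ P0, univ.filter (fun w => ∀ t, w ∉ burnedSet G v P t), hsub,
    sn_ge G _ v P hvalid _ (by simp), ?_⟩
  intro σ l hσ hX u huv huZ hu
  have key : ∀ t, ∀ w ∈ burnedSet G v P t, w = v ∨ w ∈ Z ∨ (w ∉ anc f a ∪ anc f b ∧ σ w = l) := by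
    intro t
    induction t with
    | zero => intro w hw; left; exact hw
    | succ t ih =>
      intro w hw
      have hd := burned_dist G hc v P (t + 1) w hw
      rcases hw with hw | ⟨⟨x, hx, ha⟩, hn⟩
      · exact ih w hw
      · by_cases hwv : w = v
        · exact Or.inl hwv
        by_cases hwZ : w ∈ Z
        · exact Or.inr (Or.inl hwZ)
        refine Or.inr (Or.inr ?_)
        have hwall : w ∉ anc f a ∪ anc f b := by
          intro hwall
          have hpos : 0 < G.dist v w := hc.pos_dist_of_ne (Ne.symm hwv)
          exact hn (G.dist v w - 1) (by omega) (hWP' _ ⟨hwall, hwZ, by omega⟩)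
        refine ⟨hwall, ?_⟩
        rcases ih x hx with rfl | hxZ | ⟨h1, h2⟩
        · exact hX w ⟨⟨ha, hwZ⟩, fun h => hn 0 (Nat.zero_le _) (by simpa [hP] using h)⟩
        · rcases hZ x hxZ w ha with h | h
          · exact absurd h hwZ
          · exact absurd h hwv
        · rw [← h2]; exact (hσ x w ha h1 hwall).symm
  simp only [mem_filter, mem_univ, true_and]
  intro t ht
  rcases key t u ht with h | h | ⟨h, h'⟩
  · exact huv h
  · exact huZ h
  · rcases hu with h2 | h2
    · exact h h2
    · exact h2 h'

lemma gIB_bA (a b i j : ℕ) : gIB (gbA a b) i j = 0 := by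
  unfold gbA
  rw [gIB_add, gIB_add, gIB_H, gIB_V, gIB_D]
  simp only [show (a + 1 ≤ i) = (a < i) from rfl]
  rw [zero_add, z2_self]

lemma gdeg_add (c d : Sym2 (ℕ × ℕ) → ZMod 2) (i j : ℕ) : gdeg (c + d) i j = gdeg c i j + gdeg d i j := by
  unfold gdeg; simp only [Pi.add_apply]; ring

/-- positively oriented edges of the triangulated grid -/
def gEdge (p q : ℕ × ℕ) : Prop :=
  q = (p.1 + 1, p.2) ∨ q = (p.1, p.2 + 1) ∨ q = (p.1 + 1, p.2 + 1)

lemma gdeg_gone {p q : ℕ × ℕ} (h : gEdge p q) (i j : ℕ) :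
    gdeg (gone s(p, q)) i j =
      (if p = (i + 1, j + 1) then 1 else 0) + (if q = (i + 1, j + 1) then 1 else 0) := by
  obtain ⟨a, b⟩ := p
  have ne : ∀ {x y : Sym2 (ℕ × ℕ)}, x ≠ y → (if x = y then (1 : ZMod 2) else 0) = 0 :=
    fun h => if_neg h
  rcases h with rfl | rfl | rfl <;> simp only [gdeg, gone]
  · rw [ne (x := s((i + 1, j), (i + 1, j + 1))) (by simp [Prod.ext_iff]; omega),
      ne (x := s((i + 1, j + 1), (i + 1, j + 2))) (by simp [Prod.ext_iff]; omega),
      ne (x := s((i, j), (i + 1, j + 1))) (by simp [Prod.ext_iff]; omega),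
      ne (x := s((i + 1, j + 1), (i + 2, j + 2))) (by simp [Prod.ext_iff]; omega)]
    simp only [add_zero]
    rw [add_comm]
    congr 2
    · simp [Prod.ext_iff]; omega
    · simp [Prod.ext_iff]; omega
  · rw [ne (x := s((i, j + 1), (i + 1, j + 1))) (by simp [Prod.ext_iff]; omega),
      ne (x := s((i + 1, j + 1), (i + 2, j + 1))) (by simp [Prod.ext_iff]; omega),
      ne (x := s((i, j), (i + 1, j + 1))) (by simp [Prod.ext_iff]; omega),
      ne (x := s((i + 1, j + 1), (i + 2, j + 2))) (by simp [Prod.ext_iff]; omega)]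
    simp only [add_zero, zero_add]
    rw [add_comm]
    congr 2
    · simp [Prod.ext_iff]; omega
    · simp [Prod.ext_iff]; omega
  · rw [ne (x := s((i + 1, j), (i + 1, j + 1))) (by simp [Prod.ext_iff]; omega),
      ne (x := s((i + 1, j + 1), (i + 1, j + 2))) (by simp [Prod.ext_iff]; omega),
      ne (x := s((i, j + 1), (i + 1, j + 1))) (by simp [Prod.ext_iff]; omega),
      ne (x := s((i + 1, j + 1), (i + 2, j + 1))) (by simp [Prod.ext_iff]; omega)]
    simp only [zero_add]
    rw [add_comm]
    congr 2
    · simp [Prod.ext_iff]; omega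
    · simp [Prod.ext_iff]; omega

lemma gAdj_edge {p q : ℕ × ℕ} (h : gAdj p q) : gEdge p q ∨ gEdge q p := by
  unfold gAdj at h; unfold gEdge; tauto

lemma gEdge_unique {p q p' q' : ℕ × ℕ} (h : gEdge p q) (h' : gEdge p' q') (he : s(p, q) = s(p', q')) :
    p = p' ∧ q = q' := by
  rcases Sym2.eq_iff.mp he with h1 | ⟨rfl, rfl⟩
  · exact h1
  · obtain ⟨a, b⟩ := p
    obtain ⟨c, d⟩ := q
    unfold gEdge at h h'
    simp only [Prod.mk.injEq] at h h'
    omega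

/-- the box -/
def gBox (N : ℕ) (p : ℕ × ℕ) : Prop := 1 ≤ p.1 ∧ p.1 ≤ N ∧ 1 ≤ p.2 ∧ p.2 ≤ N

/-- A colouring of the grid box by vertices of a graph representing the graph as a contact graph. -/
structure GridColoring {V : Type} (G : SimpleGraph V) (N : ℕ) (φ : ℕ × ℕ → V) (b : V) : Prop where
  conn : ∀ p q, gBox N p → gBox N q → φ p = φ q →
    Relation.ReflTransGen (fun x y => gBox N y ∧ gAdj x y ∧ φ y = φ x) p q
  ne : ∀ u, ∃ p, gBox N p ∧ φ p = u
  adj : ∀ u w, G.Adj u w → ∃ p q, gBox N p ∧ gBox N q ∧ gAdj p q ∧ φ p = u ∧ φ q = w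
  frame : ∀ p, gBox N p → (p.1 = 1 ∨ p.1 = N ∨ p.2 = 1 ∨ p.2 = N) → φ p = b

lemma rtg_mono {α : Type} {R S : α → α → Prop} (h : ∀ x y, R x y → S x y) {p q : α}
    (hpq : Relation.ReflTransGen R p q) : Relation.ReflTransGen S p q := by
  induction hpq with
  | refl => exact Relation.ReflTransGen.refl
  | tail _ h' ih => exact ih.tail (h _ _ h')

/-- reachability in n steps -/
def reachIn {α : Type} (R : α → α → Prop) (r : α) : ℕ → α → Prop
  | 0, q => q = r
  | n + 1, q => ∃ q', R q q' ∧ reachIn R r n q'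

lemma exists_par {α : Type} (R : α → α → Prop) (r : α) :
    ∃ (par : α → α) (rank : α → ℕ), ∀ q, Relation.ReflTransGen R q r →
      (rank q = 0 ↔ q = r) ∧ (q ≠ r → R q (par q) ∧ rank (par q) + 1 = rank q ∧
        Relation.ReflTransGen R (par q) r) := by
  classical
  have h1 : ∀ q, Relation.ReflTransGen R q r → ∃ n, reachIn R r n q := by
    intro q h
    induction h using Relation.ReflTransGen.head_induction_on with
    | refl => exact ⟨0, rfl⟩
    | head h _ ih => obtain ⟨n, hn⟩ := ih; exact ⟨n + 1, _, h, hn⟩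
  have h2 : ∀ n q, reachIn R r n q → Relation.ReflTransGen R q r := by
    intro n
    induction n with
    | zero => intro q h; rw [show q = r from h]
    | succ n ih => rintro q ⟨q', h, h'⟩; exact Relation.ReflTransGen.head h (ih _ h')
  let rank : α → ℕ := fun q => sInf {n | reachIn R r n q}
  have hr : ∀ q, Relation.ReflTransGen R q r → reachIn R r (rank q) q :=
    fun q h => Nat.sInf_mem (h1 q h)
  have hle : ∀ q n, reachIn R r n q → rank q ≤ n := fun q n h => Nat.sInf_le h
  have h3 : ∀ q, ∃ q', (Relation.ReflTransGen R q r → q ≠ r → R q q' ∧ rank q' + 1 = rank q ∧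
      Relation.ReflTransGen R q' r) := by
    intro q
    by_cases h : Relation.ReflTransGen R q r ∧ q ≠ r
    · have hh := hr q h.1
      cases hk : rank q with
      | zero => rw [hk] at hh; exact absurd hh h.2
      | succ k =>
        rw [hk] at hh
        obtain ⟨q', h4, h5⟩ := hh
        refine ⟨q', fun _ _ => ⟨h4, ?_, h2 _ _ h5⟩⟩
        have h6 := hle _ _ h5
        have h7 := hle q (rank q' + 1) ⟨q', h4, hr q' (h2 _ _ h5)⟩
        omega
    · exact ⟨q, fun h1 h2 => absurd ⟨h1, h2⟩ h⟩
  choose par hpar using h3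
  refine ⟨par, rank, fun q hq => ⟨⟨fun h => ?_, fun h => ?_⟩, hpar q hq⟩⟩
  · have := hr q hq; rw [h] at this; exact this
  · have := hle q 0 h; omega

/-- The tree data on the grid. -/
structure GridTree {V : Type} (N : ℕ) (φ : ℕ × ℕ → V) (f : V → V) (r : ℕ × ℕ) (par : ℕ × ℕ → ℕ × ℕ)
    (path : ℕ × ℕ → Sym2 (ℕ × ℕ) → ZMod 2) : Prop where
  box : ∀ q, gBox N q → q ≠ r → gBox N (par q)
  adj : ∀ q, gBox N q → q ≠ r → gAdj q (par q)
  path_eq : ∀ q, gBox N q → q ≠ r → path q = gone s(q, par q) + path (par q)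
  path_mem : ∀ q, gBox N q → ∀ e, path q e ≠ 0 → ∃ z, gBox N z ∧ z ≠ r ∧ e = s(z, par z) ∧
    φ z ∈ anc f (φ q) ∧ φ (par z) ∈ anc f (φ q)
  path_deg : ∀ q, gBox N q → ∀ i j, gdeg (path q) i j =
      (if q = (i + 1, j + 1) then 1 else 0) + (if r = (i + 1, j + 1) then 1 else 0)

lemma exists_tree {V : Type} (G : SimpleGraph V) (N : ℕ) (φ : ℕ × ℕ → V) (b : V)
    (hφ : GridColoring G N φ b) (v : V) (f : V → V)
    (hf1 : ∀ u, u ≠ v → G.Adj u (f u) ∧ G.dist v (f u) + 1 = G.dist v u) :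
    ∃ r par path, GridTree N φ f r par path := by
  classical
  obtain ⟨r, hrb, hrv⟩ := hφ.ne v
  let R : ℕ × ℕ → ℕ × ℕ → Prop := fun x y => gBox N y ∧ gAdj x y ∧ (φ y = φ x ∨ φ y = f (φ x))
  have hconn : ∀ p q, gBox N p → gBox N q → φ p = φ q → Relation.ReflTransGen R p q := by
    intro p q hp hq h
    exact rtg_mono (fun x y h => ⟨h.1, h.2.1, Or.inl h.2.2⟩) (hφ.conn p q hp hq h)
  have hreach : ∀ n q, gBox N q → G.dist v (φ q) = n → Relation.ReflTransGen R q r := by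
    intro n
    induction n using Nat.strong_induction_on with
    | _ n ih =>
      intro q hq hd
      by_cases h : φ q = v
      · exact hconn q r hq hrb (by rw [h, hrv])
      · obtain ⟨h1, h2⟩ := hf1 _ h
        obtain ⟨p, p', hp, hp', ha, e1, e2⟩ := hφ.adj _ _ h1
        refine (hconn q p hq hp e1.symm).trans (Relation.ReflTransGen.head ⟨hp', ha, Or.inr ?_⟩
          (ih (G.dist v (f (φ q))) (by omega) p' hp' (by rw [e2])))
        rw [e1, e2]
  obtain ⟨par, rank, hpar⟩ := exists_par R r
  have H : ∀ q, gBox N q → (rank q = 0 ↔ q = r) ∧ (q ≠ r → R q (par q) ∧ rank (par q) + 1 = rank q ∧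
        Relation.ReflTransGen R (par q) r) := fun q hq => hpar q (hreach _ q hq rfl)
  let path : ℕ × ℕ → Sym2 (ℕ × ℕ) → ZMod 2 := fun q =>
    ∑ k ∈ range (rank q), gone s(par^[k] q, par^[k + 1] q)
  have path_eq : ∀ q, gBox N q → q ≠ r → path q = gone s(q, par q) + path (par q) := by
    intro q hq hqr
    obtain ⟨h1, h2, h3⟩ := (H q hq).2 hqr
    show ∑ k ∈ range (rank q), gone s(par^[k] q, par^[k + 1] q) = _
    rw [← h2, sum_range_succ']
    simp only [Function.iterate_succ_apply, Function.iterate_zero_apply]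
    rw [add_comm]
    rfl
  have path_r : path r = 0 := by
    have : rank r = 0 := (H r hrb).1.mpr rfl
    show ∑ k ∈ range (rank r), _ = _
    rw [this]; simp
  have ind : ∀ (Q : ℕ × ℕ → Prop), Q r → (∀ q, gBox N q → q ≠ r → R q (par q) → Q (par q) → Q q) →
      ∀ q, gBox N q → Q q := by
    intro Q h0 hs
    have : ∀ n q, gBox N q → rank q = n → Q q := by
      intro n
      induction n with
      | zero => intro q hq h; rw [((H q hq).1.mp h)]; exact h0
      | succ n ih =>
        intro q hq h
        have hqr : q ≠ r := fun h' => by have := (H q hq).1.mpr h'; omega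
        obtain ⟨h1, h2, h3⟩ := (H q hq).2 hqr
        exact hs q hq hqr h1 (ih _ h1.1 (by omega))
    exact fun q hq => this _ q hq rfl
  refine ⟨r, par, path, ⟨fun q hq h => ((H q hq).2 h).1.1, fun q hq h => ((H q hq).2 h).1.2.1, path_eq, ?_, ?_⟩⟩
  · apply ind
    · intro e he; rw [path_r] at he; simp at he
    · intro q hq hqr hR ih e he
      have hsub : anc f (φ (par q)) ⊆ anc f (φ q) := by
        rintro w ⟨k, rfl⟩
        rcases hR.2.2 with h | h
        · rw [h]; exact ⟨k, rfl⟩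
        · rw [h]; exact ⟨k + 1, rfl⟩
      by_cases h : e = s(q, par q)
      · exact ⟨q, hq, hqr, h, ⟨0, rfl⟩, hsub ⟨0, rfl⟩⟩
      · rw [path_eq q hq hqr] at he
        simp only [Pi.add_apply, gone, if_neg h, zero_add] at he
        obtain ⟨z, h1, h2, h3, h4, h5⟩ := ih e he
        exact ⟨z, h1, h2, h3, hsub h4, hsub h5⟩
  · apply ind
    · intro i j; rw [path_r, z2_self]; simp [gdeg]
    · intro q hq hqr hR ih i j
      rw [path_eq q hq hqr, gdeg_add, ih]
      have : gdeg (gone s(q, par q)) i j = (if q = (i + 1, j + 1) then 1 else 0) +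
          (if par q = (i + 1, j + 1) then 1 else 0) := by
        rcases gAdj_edge hR.2.1 with h | h
        · exact gdeg_gone h i j
        · rw [Sym2.eq_swap, gdeg_gone h i j, add_comm]
      rw [this]
      have := z2_self (if par q = (i + 1, j + 1) then (1 : ZMod 2) else 0)
      linear_combination this

/-- face parity -/
def gI (c : Sym2 (ℕ × ℕ) → ZMod 2) (t : Bool × ℕ × ℕ) : ZMod 2 :=
  if t.1 then gIA c t.2.1 t.2.2 else gIB c t.2.1 t.2.2

lemma gI_add (c d : Sym2 (ℕ × ℕ) → ZMod 2) (t) : gI (c + d) t = gI c t + gI d t := by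
  unfold gI; split_ifs
  · exact gIA_add _ _ _ _
  · exact gIB_add _ _ _ _

lemma gI_outer (N : ℕ) (c : Sym2 (ℕ × ℕ) → ZMod 2) (hev : ∀ i j, gdeg c i j = 0)
    (hout : ∀ x y, ¬ gBox N x → c s(x, y) = 0) (s : Bool) (i j : ℕ)
    (h : i = 0 ∨ j = 0 ∨ N ≤ i ∨ N ≤ j) : gI c (s, i, j) = 0 := by
  have hout' : ∀ x y, ¬ gBox N y → c s(x, y) = 0 := fun x y h => by rw [Sym2.eq_swap]; exact hout _ _ h
  have hD : c s((i, j), (i + 1, j + 1)) = 0 := by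
    by_cases h' : i = 0 ∨ j = 0
    · apply hout; unfold gBox; simp only; omega
    · apply hout'; unfold gBox; simp only; omega
  have hB0 : ∀ i, gIB c i 0 = 0 := by
    intro i
    unfold gIB
    rw [sum_eq_zero, sum_eq_zero, add_zero] <;>
    · intro k _; apply hout; unfold gBox; simp
  have hB : gIB c i j = 0 := by
    rcases h with rfl | rfl | h | h
    · unfold gIB
      rw [sum_eq_zero, sum_eq_zero, add_zero]
      · simp
      · intro k hk; apply hout; unfold gBox; simp only [zero_add, mem_range] at *; omega
    · exact hB0 i
    · clear hD
      induction j with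
      | zero => exact hB0 i
      | succ j ih =>
        have h1 := gH_rel c hev (fun j q => hout _ _ (by unfold gBox; simp)) i j
        rw [ih, hout' _ (i + 1, j + 1) (by unfold gBox; simp only; omega)] at h1
        unfold gIA at h1
        rw [hout' _ (i + 1, j + 1 + 1) (by unfold gBox; simp only; omega)] at h1
        simpa using h1
    · unfold gIB
      rw [sum_eq_zero, sum_eq_zero, add_zero] <;>
      · intro k _; apply hout'; unfold gBox; simp only; omega
  unfold gI gIA
  simp only [hD, hB]; simp

lemma sink_lemma {ι τ : Type} [DecidableEq ι] (E : Finset ι) (F : Finset τ) (I : ι → τ → ZMod 2)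
    (l : ι → ZMod 2) (t : τ)
    (hmin : ∀ t' ∈ F, (E.filter (fun e => I e t ≠ l e)).card ≤ (E.filter (fun e => I e t' ≠ l e)).card)
    (e0 : ι) (he0 : e0 ∈ E) (t' : τ) (ht' : t' ∈ F)
    (hx : ∀ e ∈ E, I e t + I e t' = if e = e0 then 1 else 0) : I e0 t = l e0 := by
  by_contra hne
  have := hmin t' ht'
  have h2 : E.filter (fun e => I e t' ≠ l e) ⊂ E.filter (fun e => I e t ≠ l e) := by
    rw [Finset.ssubset_iff_of_subset]
    · refine ⟨e0, by simp [he0, hne], ?_⟩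
      simp only [mem_filter, not_and, not_not]
      intro _
      have h := hx e0 he0
      rw [if_pos rfl] at h
      generalize I e0 t = a at *
      generalize I e0 t' = b at *
      generalize l e0 = c at *
      revert a b c; decide
    · intro e he
      simp only [mem_filter] at he ⊢
      refine ⟨he.1, ?_⟩
      by_cases h : e = e0
      · rw [h]; exact hne
      · have h' := hx e he.1
        rw [if_neg h] at h'
        have : I e t = I e t' := by
          clear he
          generalize I e t = a at *
          generalize I e t' = b at *
          revert a b; decide
        rw [this]; exact he.2
  have := Finset.card_lt_card h2
  omega

lemma exists_bfs {V : Type} (G : SimpleGraph V) (hc : G.Connected) (v : V) :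
    ∃ f : V → V, f v = v ∧ ∀ u, u ≠ v → G.Adj u (f u) ∧ G.dist v (f u) + 1 = G.dist v u := by
  classical
  have : ∀ u, ∃ w, (u ≠ v → G.Adj u w ∧ G.dist v w + 1 = G.dist v u) ∧ (u = v → w = v) := by
    intro u
    by_cases hu : u = v
    · exact ⟨v, fun h => absurd hu h, fun _ => rfl⟩
    · obtain ⟨p, hp⟩ := hc.exists_walk_length_eq_dist u v
      cases p with
      | nil => exact absurd rfl hu
      | cons h p =>
        rename_i w
        refine ⟨w, fun _ => ⟨h, ?_⟩, fun h => absurd h hu⟩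
        rw [SimpleGraph.Walk.length_cons] at hp
        have h1 := SimpleGraph.dist_le p
        have h2 : G.dist u v ≤ G.dist u w + G.dist w v := hc.dist_triangle
        rw [SimpleGraph.dist_eq_one_iff_adj.mpr h] at h2
        rw [SimpleGraph.dist_comm (u := v), SimpleGraph.dist_comm (u := v)]
        omega
  choose f hf using this
  exact ⟨f, (hf v).2 rfl, fun u => (hf u).1⟩

lemma telescope_z2 (g : ℕ → ZMod 2) (N : ℕ) (hN : 1 ≤ N) :
    ∑ k ∈ Ico 1 N, (g k + g (k + 1)) = g 1 + g N := by
  induction N, hN using Nat.le_induction with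
  | base => simp [z2_self]
  | succ N hN ih =>
    rw [sum_Ico_succ_top hN, ih]
    have := z2_self (g N)
    linear_combination this

lemma part_B {V : Type} [Fintype V] (G : SimpleGraph V) (hc : G.Connected) (N : ℕ) (φ : ℕ × ℕ → V)
    (b : V) (hφ : GridColoring G N φ b) (v : V) (Z : Set V)
    (hZ : ∀ z ∈ Z, ∀ y, G.Adj z y → y ∈ Z ∨ y = v)
    (h3 : {w | G.Adj v w ∧ w ∉ Z}.ncard ≤ 3) :
    Fintype.card V ≤ 3 * sn G (fun _ => 2) v + 1 + Z.ncard := by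
  classical
  obtain ⟨f, hf0, hf1⟩ := exists_bfs G hc v
  obtain ⟨r, par, path, ht⟩ := exists_tree G N φ b hφ v f hf1
  have hfw := fire_wall G hc v Z hZ h3 f hf0 (fun u hu => (hf1 u hu).2)
  choose X S hXs hSc hS using hfw
  choose rep hrepb hrep using hφ.ne
  -- fundamental cycles
  set C : ℕ × ℕ → ℕ × ℕ → Sym2 (ℕ × ℕ) → ZMod 2 := fun p q => gone s(p, q) + path p + path q with hC
  have hCev : ∀ p q, gBox N p → gBox N q → gEdge p q → ∀ i j, gdeg (C p q) i j = 0 := by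
    intro p q hp hq he i j
    simp only [hC]
    rw [gdeg_add, gdeg_add, gdeg_gone he, ht.path_deg p hp, ht.path_deg q hq]
    generalize (if p = (i + 1, j + 1) then (1 : ZMod 2) else 0) = x
    generalize (if q = (i + 1, j + 1) then (1 : ZMod 2) else 0) = y
    generalize (if r = (i + 1, j + 1) then (1 : ZMod 2) else 0) = z
    revert x y z; decide
  have hpoff : ∀ q, gBox N q → ∀ x y, φ x ∉ anc f (φ q) → path q s(x, y) = 0 := by
    intro q hq x y hx
    by_contra hne
    obtain ⟨z, h1, h2, h3, h4, h5⟩ := ht.path_mem q hq _ hne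
    rcases Sym2.eq_iff.mp h3 with ⟨rfl, rfl⟩ | ⟨rfl, rfl⟩
    · exact hx h4
    · exact hx h5
  have hpout : ∀ q, gBox N q → ∀ x y, ¬ gBox N x → path q s(x, y) = 0 := by
    intro q hq x y hx
    by_contra hne
    obtain ⟨z, h1, h2, h3, h4, h5⟩ := ht.path_mem q hq _ hne
    rcases Sym2.eq_iff.mp h3 with ⟨rfl, rfl⟩ | ⟨rfl, rfl⟩
    · exact hx h1
    · exact hx (ht.box _ h1 h2)
  have hCoff : ∀ p q, gBox N p → gBox N q → ∀ x y, φ x ∉ anc f (φ p) ∪ anc f (φ q) → C p q s(x, y) = 0 := by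
    intro p q hp hq x y hx
    rw [Set.mem_union, not_or] at hx
    simp only [hC, Pi.add_apply]
    rw [hpoff p hp x y hx.1, hpoff q hq x y hx.2]
    simp only [gone, add_zero]
    rw [if_neg]
    intro h
    rcases Sym2.eq_iff.mp h with ⟨rfl, rfl⟩ | ⟨rfl, rfl⟩
    · exact hx.1 ⟨0, rfl⟩
    · exact hx.2 ⟨0, rfl⟩
  have hCout : ∀ p q, gBox N p → gBox N q → ∀ x y, ¬ gBox N x → C p q s(x, y) = 0 := by
    intro p q hp hq x y hx
    simp only [hC, Pi.add_apply]
    rw [hpout p hp x y hx, hpout q hq x y hx]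
    simp only [gone, add_zero]
    rw [if_neg]
    intro h
    rcases Sym2.eq_iff.mp h with ⟨rfl, rfl⟩ | ⟨rfl, rfl⟩
    · exact hx hp
    · exact hx hq
  -- tree edges
  let tree : ℕ × ℕ → ℕ × ℕ → Prop := fun p q => (p ≠ r ∧ q = par p) ∨ (q ≠ r ∧ p = par q)
  have hCtree : ∀ p q, gBox N p → gBox N q → tree p q → C p q = 0 := by
    intro p q hp hq h
    have h2 : ∀ (a b : Sym2 (ℕ × ℕ) → ZMod 2), a + (a + b) + b = 0 := by
      intro a b; funext e; simp only [Pi.add_apply, Pi.zero_apply]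
      generalize a e = x; generalize b e = y; revert x y; decide
    rcases h with ⟨h1, rfl⟩ | ⟨h1, rfl⟩
    · simp only [hC]; rw [ht.path_eq p hp h1]; exact h2 _ _
    · simp only [hC]; rw [ht.path_eq q hq h1, Sym2.eq_swap, add_right_comm]; exact h2 _ _
  have hCnon : ∀ p q p' q', gBox N p → gBox N q → ¬ tree p' q' →
      C p q s(p', q') = if s(p', q') = s(p, q) then 1 else 0 := by
    intro p q p' q' hp hq h
    have h0 : ∀ x, gBox N x → path x s(p', q') = 0 := by
      intro x hx
      by_contra hne
      obtain ⟨z, h1, h2, h3, -, -⟩ := ht.path_mem x hx _ hne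
      apply h
      rcases Sym2.eq_iff.mp h3 with ⟨rfl, rfl⟩ | ⟨rfl, rfl⟩
      · exact Or.inl ⟨h2, rfl⟩
      · exact Or.inr ⟨h2, rfl⟩
    simp only [hC, Pi.add_apply, h0 p hp, h0 q hq, add_zero, gone]
  -- sides
  set σ : ℕ × ℕ → ℕ × ℕ → V → ZMod 2 := fun p q u => gIA (C p q) (rep u).1 (rep u).2 with hσ
  set l : ℕ × ℕ → ℕ × ℕ → ZMod 2 := fun p q =>
    if h : (X (φ p) (φ q)).Nonempty then σ p q h.some else 0 with hl
  have hsave : ∀ p q, gBox N p → gBox N q → gEdge p q → ∀ u, u ≠ v → u ∉ Z →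
      (φ p = u ∨ φ q = u ∨ σ p q u ≠ l p q) → u ∈ S (φ p) (φ q) := by
    intro p q hp hq he u huv huZ hu
    have h0 : ∀ j y, C p q s((0, j), y) = 0 := fun j y => hCout p q hp hq _ _ (by unfold gBox; simp)
    have hclass : ∀ x y, Relation.ReflTransGen (fun x y => gBox N y ∧ gAdj x y ∧ φ y = φ x) x y →
        φ x ∉ anc f (φ p) ∪ anc f (φ q) → φ y = φ x ∧ gIA (C p q) x.1 x.2 = gIA (C p q) y.1 y.2 := by
      intro x y h hx
      induction h with
      | refl => exact ⟨rfl, rfl⟩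
      | tail _ h ih =>
        have hz := h.2.2.trans ih.1
        refine ⟨hz, ih.2.trans (gside_step _ (hCev p q hp hq he) h0 h.2.1
          (fun r => hCoff p q hp hq _ _ (by rwa [ih.1])) (fun r => hCoff p q hp hq _ _ (by rwa [hz])))⟩
    refine hS (φ p) (φ q) (σ p q) (l p q) ?_ ?_ u huv huZ ?_
    · intro x y hxy hx hy
      obtain ⟨a, c, ha, hcb, hac, rfl, rfl⟩ := hφ.adj x y hxy
      have e1 := hclass a (rep (φ a)) (hφ.conn _ _ ha (hrepb _) (hrep _).symm) hx
      have e2 := hclass c (rep (φ c)) (hφ.conn _ _ hcb (hrepb _) (hrep _).symm) hy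
      have e3 := gside_step _ (hCev p q hp hq he) h0 hac
          (fun r => hCoff p q hp hq _ _ hx) (fun r => hCoff p q hp hq _ _ hy)
      simp only [hσ]
      rw [← e1.2, ← e2.2, e3]
    · intro x hx
      simp only [hl]
      have hne : (X (φ p) (φ q)).Nonempty := ⟨x, hx⟩
      rw [dif_pos hne]
      rw [hXs _ _ hx hne.some_mem]
    · rcases hu with rfl | rfl | hu
      · exact Or.inl (Or.inl ⟨0, rfl⟩)
      · exact Or.inl (Or.inr ⟨0, rfl⟩)
      · exact Or.inr hu
  have hltree : ∀ p q, gBox N p → gBox N q → tree p q → l p q = 0 := by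
    intro p q hp hq h
    simp only [hl, hσ, hCtree p q hp hq h, gIA_zero]
    simp
  -- sink
  let B : Finset (ℕ × ℕ) := (Icc 1 N) ×ˢ (Icc 1 N)
  have hB : ∀ p, p ∈ B ↔ gBox N p := by
    intro p; simp only [B, mem_product, mem_Icc, gBox]; tauto
  let E : Finset ((ℕ × ℕ) × (ℕ × ℕ)) := (B ×ˢ B).filter (fun e => gEdge e.1 e.2 ∧ ¬ tree e.1 e.2)
  let F : Finset (Bool × ℕ × ℕ) := univ ×ˢ (range (N + 1) ×ˢ range (N + 1))
  have hF : ∀ s i j, (s, i, j) ∈ F ↔ i ≤ N ∧ j ≤ N := by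
    intro s i j; simp only [F, mem_product, mem_univ, true_and, mem_range]; omega
  let val : Bool × ℕ × ℕ → ℕ := fun t => (E.filter (fun e => gI (C e.1 e.2) t ≠ l e.1 e.2)).card
  obtain ⟨t, htF, htmin⟩ := Finset.exists_min_image F val ⟨(true, 0, 0), by rw [hF]; omega⟩
  have hsink : ∀ t, (∀ t' ∈ F, val t ≤ val t') → ∀ p q, gBox N p → gBox N q → gEdge p q → ∀ t' ∈ F,
      (∀ c, (∀ i j, gdeg c i j = 0) → (∀ j q, c s((0, j), q) = 0) → gI c t + gI c t' = c s(p, q)) →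
      gI (C p q) t = l p q := by
    intro t htmin p q hp hq he t' ht' hx
    by_cases htr : tree p q
    · rw [hltree p q hp hq htr, hCtree p q hp hq htr]
      unfold gI; split_ifs
      · exact gIA_zero _ _
      · exact gIB_zero _ _
    · refine sink_lemma E F (fun e t => gI (C e.1 e.2) t) (fun e => l e.1 e.2) t htmin (p, q) ?_ t' ht' ?_
      · simp only [E, mem_filter, mem_product, hB]; exact ⟨⟨hp, hq⟩, he, htr⟩
      · rintro ⟨p', q'⟩ he'
        simp only [E, mem_filter, mem_product, hB] at he'
        obtain ⟨⟨hp', hq'⟩, he', htr'⟩ := he'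
        simp only
        rw [hx _ (hCev p' q' hp' hq' he') (fun j y => hCout p' q' hp' hq' _ _ (by unfold gBox; simp)),
          hCnon p' q' p q hp' hq' htr]
        congr 1
        apply propext
        constructor
        · intro h
          obtain ⟨rfl, rfl⟩ := gEdge_unique he he' h
          rfl
        · intro h
          rw [Prod.mk.injEq] at h
          rw [h.1, h.2]
  -- crossing relations
  have cH : ∀ c : Sym2 (ℕ × ℕ) → ZMod 2, (∀ i j, gdeg c i j = 0) → (∀ j q, c s((0, j), q) = 0) → ∀ i j,
      gI c (true, i, j + 1) + gI c (false, i, j) = c s((i, j + 1), (i + 1, j + 1)) := by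
    intro c h1 h2 i j; simpa [gI] using gH_rel c h1 h2 i j
  have cV : ∀ c : Sym2 (ℕ × ℕ) → ZMod 2, ∀ i j,
      gI c (false, i + 1, j) + gI c (true, i, j) = c s((i + 1, j), (i + 1, j + 1)) := by
    intro c i j; simp only [gI, if_true]
    simp only [Bool.false_eq_true, if_false]
    rw [gIB_succ]
    have := z2_self (gIA c i j)
    linear_combination this
  have cD : ∀ c : Sym2 (ℕ × ℕ) → ZMod 2, ∀ i j,
      gI c (true, i, j) + gI c (false, i, j) = c s((i, j), (i + 1, j + 1)) := by
    intro c i j; simp only [gI, if_true]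
    simp only [Bool.false_eq_true, if_false]
    unfold gIA
    have := z2_self (gIB c i j)
    linear_combination this
  -- conclusion from a cover
  have hfin : ∀ S1 S2 S3 : Finset V, S1.card ≤ sn G (fun _ => 2) v → S2.card ≤ sn G (fun _ => 2) v →
      S3.card ≤ sn G (fun _ => 2) v → (∀ u, u ≠ v → u ∉ Z → u ∈ S1 ∨ u ∈ S2 ∨ u ∈ S3) →
      Fintype.card V ≤ 3 * sn G (fun _ => 2) v + 1 + Z.ncard := by
    intro S1 S2 S3 h1 h2 h3 hcov
    have hsub : (univ : Finset V) ⊆ ((S1 ∪ S2) ∪ S3 ∪ {v}) ∪ Z.toFinset := by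
      intro u _
      simp only [mem_union, mem_singleton, Set.mem_toFinset]
      have := hcov u
      tauto
    have h4 := Finset.card_le_card hsub
    have h5 := Finset.card_union_le ((S1 ∪ S2) ∪ S3 ∪ {v}) Z.toFinset
    have h6 := Finset.card_union_le ((S1 ∪ S2) ∪ S3) {v}
    have h7 := Finset.card_union_le (S1 ∪ S2) S3
    have h8 := Finset.card_union_le S1 S2
    rw [card_singleton] at h6
    rw [← Set.ncard_eq_toFinset_card'] at h5
    rw [card_univ] at h4
    omega
  -- three edges of a triangle
  have htri : ∀ p1 p2 p3 : ℕ × ℕ, gBox N p1 → gBox N p2 → gBox N p3 → gEdge p1 p2 → gEdge p2 p3 →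
      gEdge p1 p3 → ∀ t, gI (C p1 p2) t = l p1 p2 → gI (C p2 p3) t = l p2 p3 → gI (C p1 p3) t = l p1 p3 →
      gI (gone s(p1, p2) + gone s(p2, p3) + gone s(p1, p3)) t = 1 →
      (∀ p, gIA (gone s(p1, p2) + gone s(p2, p3) + gone s(p1, p3)) p.1 p.2 = 1 → p = p1) →
      Fintype.card V ≤ 3 * sn G (fun _ => 2) v + 1 + Z.ncard := by
    intro p1 p2 p3 b1 b2 b3 e12 e23 e13 t h12 h23 h13 ht1 hp1
    have hsum : C p1 p2 + C p2 p3 + C p1 p3 = gone s(p1, p2) + gone s(p2, p3) + gone s(p1, p3) := by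
      funext e
      simp only [hC, Pi.add_apply]
      have k1 := z2_self (path p1 e)
      have k2 := z2_self (path p2 e)
      have k3 := z2_self (path p3 e)
      linear_combination k1 + k2 + k3
    rw [← hsum, gI_add, gI_add, h12, h23, h13] at ht1
    apply hfin _ _ _ (hSc (φ p1) (φ p2)) (hSc (φ p2) (φ p3)) (hSc (φ p1) (φ p3))
    intro u huv huZ
    by_contra hcon
    rw [not_or, not_or] at hcon
    obtain ⟨n1, n2, n3⟩ := hcon
    have m1 := mt (hsave p1 p2 b1 b2 e12 u huv huZ) n1
    have m2 := mt (hsave p2 p3 b2 b3 e23 u huv huZ) n2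
    have m3 := mt (hsave p1 p3 b1 b3 e13 u huv huZ) n3
    simp only [not_or, not_not] at m1 m2 m3
    have hh : gIA (gone s(p1, p2) + gone s(p2, p3) + gone s(p1, p3)) (rep u).1 (rep u).2 = 1 := by
      rw [← hsum, gIA_add, gIA_add, ← ht1, ← m1.2.2, ← m2.2.2, ← m3.2.2]
    have := hp1 _ hh
    exact m1.1 (by rw [← this, hrep])
  obtain ⟨s, i, j⟩ := t
  rw [hF] at htF
  by_cases hout : i = 0 ∨ j = 0 ∨ N ≤ i ∨ N ≤ j
  · -- outer sink
    have houter : ∀ s' i' j', (i' = 0 ∨ j' = 0 ∨ N ≤ i' ∨ N ≤ j') → ∀ t' ∈ F, val (s', i', j') ≤ val t' := by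
      intro s' i' j' h t' ht'
      refine le_trans (le_of_eq ?_) (htmin t' ht')
      simp only [val]
      congr 1
      apply Finset.filter_congr
      rintro ⟨p, q⟩ he
      simp only [E, mem_filter, mem_product, hB] at he
      obtain ⟨⟨hp, hq⟩, he, -⟩ := he
      simp only
      rw [gI_outer N _ (hCev p q hp hq he) (hCout p q hp hq) s' i' j' h,
        gI_outer N _ (hCev p q hp hq he) (hCout p q hp hq) s i j hout]
    have hlz : ∀ p q, gBox N p → gBox N q → gEdge p q → ∀ s i j, (i = 0 ∨ j = 0 ∨ N ≤ i ∨ N ≤ j) → ∀ t' ∈ F,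
      (∀ c, (∀ i j, gdeg c i j = 0) → (∀ j q, c s((0, j), q) = 0) → gI c (s, i, j) + gI c t' = c s(p, q)) →
        l p q = 0 := by
      intro p q hp hq he s i j ho t' ht' hx
      rw [← hsink _ (houter s i j ho) p q hp hq he t' ht' hx]
      exact gI_outer N _ (hCev p q hp hq he) (hCout p q hp hq) s i j ho
    by_cases hN : N ≤ 1
    · have : ∀ u, rep u = (1, 1) := by
        intro u
        have := hrepb u
        unfold gBox at this
        ext <;> simp only <;> omega
      have hcard : Fintype.card V ≤ 1 := by
        rw [Fintype.card_le_one_iff]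
        intro u w
        rw [← hrep u, ← hrep w, this, this]
      omega
    · push Not at hN
      apply hfin _ _ _ (hSc b b) (hSc b b) (hSc b b)
      intro u huv huZ
      left
      by_contra hcon
      have hfr : ∀ p, gBox N p → (p.1 = 1 ∨ p.1 = N ∨ p.2 = 1 ∨ p.2 = N) → φ p = b := hφ.frame
      have main : ∀ p q, gBox N p → gBox N q → gEdge p q → (p.1 = 1 ∨ p.1 = N ∨ p.2 = 1 ∨ p.2 = N) →
          (q.1 = 1 ∨ q.1 = N ∨ q.2 = 1 ∨ q.2 = N) → l p q = 0 → b ≠ u ∧ σ p q u = 0 := by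
        intro p q hp hq he fp fq hl0
        have h1 := hsave p q hp hq he u huv huZ
        rw [hfr p hp fp, hfr q hq fq, hl0] at h1
        have := mt h1 hcon
        simp only [not_or, not_not] at this
        exact ⟨this.1, this.2.2⟩
      have mb : ∀ k ∈ Ico 1 N, b ≠ u ∧ σ (k, 1) (k + 1, 1) u = 0 := by
        intro k hk
        rw [mem_Ico] at hk
        have b1 : gBox N (k, 1) := by unfold gBox; simp only; omega
        have b2 : gBox N (k + 1, 1) := by unfold gBox; simp only; omega
        have e : gEdge (k, 1) (k + 1, 1) := Or.inl rfl
        refine main _ _ b1 b2 e (by simp) (by simp) ?_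
        refine hlz _ _ b1 b2 e false k 0 (by simp) (true, k, 1) (by rw [hF]; omega) ?_
        intro c h1 h2
        rw [add_comm]; exact cH c h1 h2 k 0
      have mt : ∀ k ∈ Ico 1 N, σ (k, N) (k + 1, N) u = 0 := by
        intro k hk
        rw [mem_Ico] at hk
        have b1 : gBox N (k, N) := by unfold gBox; simp only; omega
        have b2 : gBox N (k + 1, N) := by unfold gBox; simp only; omega
        have e : gEdge (k, N) (k + 1, N) := Or.inl rfl
        refine (main _ _ b1 b2 e (by simp) (by simp) ?_).2
        refine hlz _ _ b1 b2 e true k N (by simp) (false, k, N - 1) (by rw [hF]; omega) ?_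
        intro c h1 h2
        have := cH c h1 h2 k (N - 1)
        rwa [show N - 1 + 1 = N by omega] at this
      have ml : ∀ k ∈ Ico 1 N, σ (1, k) (1, k + 1) u = 0 := by
        intro k hk
        rw [mem_Ico] at hk
        have b1 : gBox N (1, k) := by unfold gBox; simp only; omega
        have b2 : gBox N (1, k + 1) := by unfold gBox; simp only; omega
        have e : gEdge (1, k) (1, k + 1) := Or.inr (Or.inl rfl)
        refine (main _ _ b1 b2 e (by simp) (by simp) ?_).2
        refine hlz _ _ b1 b2 e true 0 k (by simp) (false, 1, k) (by rw [hF]; omega) ?_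
        intro c h1 h2
        rw [add_comm]; exact cV c 0 k
      have mr : ∀ k ∈ Ico 1 N, σ (N, k) (N, k + 1) u = 0 := by
        intro k hk
        rw [mem_Ico] at hk
        have b1 : gBox N (N, k) := by unfold gBox; simp only; omega
        have b2 : gBox N (N, k + 1) := by unfold gBox; simp only; omega
        have e : gEdge (N, k) (N, k + 1) := Or.inr (Or.inl rfl)
        refine (main _ _ b1 b2 e (by simp) (by simp) ?_).2
        refine hlz _ _ b1 b2 e false N k (by simp) (true, N - 1, k) (by rw [hF]; omega) ?_
        intro c h1 h2
        have := cV c (N - 1) k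
        rwa [show N - 1 + 1 = N by omega] at this
      have hub : b ≠ u := (mb 1 (by rw [mem_Ico]; omega)).1
      have hrb := hrepb u
      have hnf : ¬ ((rep u).1 = 1 ∨ (rep u).1 = N ∨ (rep u).2 = 1 ∨ (rep u).2 = N) := fun h =>
        hub (by rw [← hfr _ hrb h, hrep])
      unfold gBox at hrb
      obtain ⟨x, y⟩ : ∃ x y, rep u = (x, y) := ⟨_, _, rfl⟩
      obtain ⟨y, hxy⟩ := y
      simp only [hσ, hxy] at mb mt ml mr
      rw [hxy] at hrb hnf
      simp only at hrb hnf
      have hsum : ∑ k ∈ Ico 1 N, (gIA (C (k, 1) (k + 1, 1)) x y + gIA (C (k, N) (k + 1, N)) x y +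
          gIA (C (1, k) (1, k + 1)) x y + gIA (C (N, k) (N, k + 1)) x y) = 0 := by
        apply sum_eq_zero
        intro k hk
        rw [(mb k hk).2, mt k hk, ml k hk, mr k hk]; simp
      have gH : ∀ a c, gIA (gone s((a, c), (a + 1, c))) x y = 0 := by
        intro a c
        unfold gIA; rw [gIB_H]; unfold gone; rw [if_neg]; · simp
        simp [Prod.ext_iff]; omega
      have gV : ∀ a c, gIA (gone s((a, c), (a, c + 1))) x y = if y = c ∧ a ≤ x then 1 else 0 := by
        intro a c
        unfold gIA; rw [gIB_V]
        have : gone s((a, c), (a, c + 1)) s((x, y), (x + 1, y + 1)) = 0 := by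
          unfold gone; rw [if_neg]; simp [Prod.ext_iff]; omega
        rw [this, add_zero]
      simp only [hC, gIA_add, gH, gV] at hsum
      have t1 := telescope_z2 (fun k => gIA (path (k, 1)) x y) N (by omega)
      have t2 := telescope_z2 (fun k => gIA (path (k, N)) x y) N (by omega)
      have t3 := telescope_z2 (fun k => gIA (path (1, k)) x y) N (by omega)
      have t4 := telescope_z2 (fun k => gIA (path (N, k)) x y) N (by omega)
      have t5 : ∑ k ∈ Ico 1 N, (if y = k ∧ 1 ≤ x then (1 : ZMod 2) else 0) = 1 := by
        rw [sum_eq_single y]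
        · rw [if_pos]; omega
        · intro k _ hk; rw [if_neg]; omega
        · intro hk; rw [mem_Ico] at hk; omega
      have t6 : ∑ k ∈ Ico 1 N, (if y = k ∧ N ≤ x then (1 : ZMod 2) else 0) = 0 := by
        apply sum_eq_zero
        intro k _; rw [if_neg]; omega
      simp only [sum_add_distrib] at hsum t1 t2 t3 t4
      rw [t5, t6, sum_const_zero] at hsum
      have k1 := z2_self (gIA (path (1, 1)) x y)
      have k2 := z2_self (gIA (path (1, N)) x y)
      have k3 := z2_self (gIA (path (N, 1)) x y)
      have k4 := z2_self (gIA (path (N, N)) x y)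
      have : (1 : ZMod 2) = 0 := by
        linear_combination hsum - t1 - t2 - t3 - t4 - k1 - k2 - k3 - k4
      exact absurd this (by decide)
  · push Not at hout
    obtain ⟨hi0, hj0, hiN, hjN⟩ := hout
    have b1 : gBox N (i, j) := by unfold gBox; simp only; omega
    have b2 : gBox N (i + 1, j) := by unfold gBox; simp only; omega
    have b2' : gBox N (i, j + 1) := by unfold gBox; simp only; omega
    have b3 : gBox N (i + 1, j + 1) := by unfold gBox; simp only; omega
    have e13 : gEdge (i, j) (i + 1, j + 1) := Or.inr (Or.inr rfl)
    cases s
    · have e12 : gEdge (i, j) (i, j + 1) := Or.inr (Or.inl rfl)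
      have e23 : gEdge (i, j + 1) (i + 1, j + 1) := Or.inl rfl
      refine htri _ _ _ b1 b2' b3 e12 e23 e13 (false, i, j) ?_ ?_ ?_ ?_ ?_
      · refine hsink _ htmin _ _ b1 b2' e12 (true, i - 1, j) (by rw [hF]; omega) ?_
        intro c h1 h2
        have := cV c (i - 1) j
        rwa [show i - 1 + 1 = i by omega] at this
      · refine hsink _ htmin _ _ b2' b3 e23 (true, i, j + 1) (by rw [hF]; omega) ?_
        intro c h1 h2
        rw [add_comm]; exact cH c h1 h2 i j
      · refine hsink _ htmin _ _ b1 b3 e13 (true, i, j) (by rw [hF]; omega) ?_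
        intro c h1 h2
        rw [add_comm]; exact cD c i j
      · have := gIB_bB i j i j
        simpa [gI, gbB] using this
      · intro p hp
        have := gIA_bB i j p.1 p.2
        unfold gbB at this
        rw [hp] at this
        exact absurd this (by decide)
    · have e12 : gEdge (i, j) (i + 1, j) := Or.inl rfl
      have e23 : gEdge (i + 1, j) (i + 1, j + 1) := Or.inr (Or.inl rfl)
      refine htri _ _ _ b1 b2 b3 e12 e23 e13 (true, i, j) ?_ ?_ ?_ ?_ ?_
      · refine hsink _ htmin _ _ b1 b2 e12 (false, i, j - 1) (by rw [hF]; omega) ?_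
        intro c h1 h2
        have := cH c h1 h2 i (j - 1)
        rwa [show j - 1 + 1 = j by omega] at this
      · refine hsink _ htmin _ _ b2 b3 e23 (false, i + 1, j) (by rw [hF]; omega) ?_
        intro c h1 h2
        rw [add_comm]; exact cV c i j
      · refine hsink _ htmin _ _ b1 b3 e13 (false, i, j) (by rw [hF]; omega) ?_
        intro c h1 h2
        exact cD c i j
      · have := gIA_bA i j i j
        simpa [gI, gbA] using this
      · intro p hp
        have := gIA_bA i j p.1 p.2
        unfold gbA at this
        rw [hp] at this
        by_contra hne
        rw [if_neg (fun h => hne (Prod.ext h.1 h.2))] at this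
        exact absurd this (by decide)

/-- connectedness of a set for a relation -/
def cnSet {α : Type} (adj : α → α → Prop) (T : Set α) : Prop :=
  ∀ p ∈ T, ∀ q ∈ T, Relation.ReflTransGen (fun x y => adj x y ∧ x ∈ T ∧ y ∈ T) p q

lemma rtg_set_mono {α : Type} {adj : α → α → Prop} {T T' : Set α} (h : T ⊆ T') {p q : α}
    (hpq : Relation.ReflTransGen (fun x y => adj x y ∧ x ∈ T ∧ y ∈ T) p q) :
    Relation.ReflTransGen (fun x y => adj x y ∧ x ∈ T' ∧ y ∈ T') p q :=
  rtg_mono (fun _ _ h' => ⟨h'.1, h h'.2.1, h h'.2.2⟩) hpq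

lemma rtg_symm {α : Type} {R : α → α → Prop} (h : ∀ x y, R x y → R y x) {p q : α}
    (hpq : Relation.ReflTransGen R p q) : Relation.ReflTransGen R q p := by
  induction hpq with
  | refl => exact Relation.ReflTransGen.refl
  | tail _ h' ih => exact Relation.ReflTransGen.head (h _ _ h') ih

lemma rtg_set_symm {α : Type} {adj : α → α → Prop} (hs : ∀ x y, adj x y → adj y x) {T : Set α} {p q : α}
    (hpq : Relation.ReflTransGen (fun x y => adj x y ∧ x ∈ T ∧ y ∈ T) p q) :
    Relation.ReflTransGen (fun x y => adj x y ∧ x ∈ T ∧ y ∈ T) q p :=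
  rtg_symm (fun _ _ h => ⟨hs _ _ h.1, h.2.2, h.2.1⟩) hpq

/-- the class of colour k -/
def cls {α K : Type} (Bx : Finset α) (c : α → Option K) (k : K) : Set α := {p | p ∈ Bx ∧ c p = some k}

lemma ext_col {α K : Type} (adj : α → α → Prop) (hs : ∀ x y, adj x y → adj y x) (Bx : Finset α)
    (A : K → α → Prop) (n : ℕ) : ∀ (c : α → Option K), {p | p ∈ Bx ∧ c p = none}.ncard = n →
    (∀ k, cnSet adj (cls Bx c k)) →
    ∃ c' : α → Option K, (∀ p k, c p = some k → c' p = some k) ∧ (∀ k, cnSet adj (cls Bx c' k)) ∧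
      (∀ p k, c' p = some k → c p = some k ∨ A k p) ∧
      (∀ p ∈ Bx, ∀ q ∈ Bx, c' p = none → adj q p → ∀ k, c' q = some k → ¬ A k p) := by
  classical
  induction n using Nat.strong_induction_on with
  | _ n ih =>
    intro c hn hc
    by_cases hex : ∀ p ∈ Bx, ∀ q ∈ Bx, c p = none → adj q p → ∀ k, c q = some k → ¬ A k p
    · exact ⟨c, fun p k h => h, hc, fun p k h => Or.inl h, hex⟩
    · push Not at hex
      obtain ⟨p, hp, q, hq, hpn, hqp, k, hqk, hA⟩ := hex
      let c1 : α → Option K := Function.update c p (some k)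
      have hc1p : c1 p = some k := by simp [c1]
      have hc1 : ∀ x, x ≠ p → c1 x = c x := fun x hx => by simp [c1, hx]
      have hext : ∀ x l, c x = some l → c1 x = some l := by
        intro x l h
        rw [hc1]; · exact h
        rintro rfl; rw [hpn] at h; exact absurd h (by simp)
      have hsub : ∀ l, cls Bx c l ⊆ cls Bx c1 l := fun l x hx => ⟨hx.1, hext _ _ hx.2⟩
      have hlt : {x | x ∈ Bx ∧ c1 x = none}.ncard < n := by
        rw [← hn]
        apply Set.ncard_lt_ncard
        · refine ⟨fun x hx => ⟨hx.1, ?_⟩, fun h => ?_⟩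
          · have : x ≠ p := by rintro rfl; have h' := hx.2; rw [hc1p] at h'; exact absurd h' (by simp)
            rw [← hc1 x this]; exact hx.2
          · have := h (show p ∈ {x | x ∈ Bx ∧ c x = none} from ⟨hp, hpn⟩)
            have h' := this.2
            rw [hc1p] at h'; exact absurd h' (by simp)
        · exact Bx.finite_toSet.subset fun x hx => hx.1
      have hq1 : q ∈ cls Bx c k := ⟨hq, hqk⟩
      have hp1 : p ∈ cls Bx c1 k := ⟨hp, hc1p⟩
      have hcn : ∀ l, cnSet adj (cls Bx c1 l) := by
        intro l
        have toq : ∀ x ∈ cls Bx c1 l, x ∈ cls Bx c l ∨ (x = p ∧ l = k) := by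
          intro x hx
          by_cases h : x = p
          · right; refine ⟨h, ?_⟩; have := hx.2; rw [h, hc1p] at this; exact (Option.some.inj this).symm
          · left; exact ⟨hx.1, by rw [← hc1 x h]; exact hx.2⟩
        have pq : ∀ x ∈ cls Bx c k, Relation.ReflTransGen
            (fun x y => adj x y ∧ x ∈ cls Bx c1 k ∧ y ∈ cls Bx c1 k) x p := by
          intro x hx
          exact (rtg_set_mono (hsub k) (hc k x hx q hq1)).tail ⟨hqp, hsub k hq1, hp1⟩
        intro x hx y hy
        rcases toq x hx with h1 | ⟨rfl, rfl⟩ <;> rcases toq y hy with h2 | ⟨h2, h3⟩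
        · exact rtg_set_mono (hsub l) (hc l x h1 y h2)
        · subst h2 h3; exact pq x h1
        · exact rtg_set_symm hs (pq y h2)
        · subst h2; exact Relation.ReflTransGen.refl
      obtain ⟨c', h1, h2, h3, h4⟩ := ih _ hlt c1 rfl hcn
      refine ⟨c', fun x l h => h1 x l (hext x l h), h2, ?_, h4⟩
      intro x l h
      rcases h3 x l h with h5 | h5
      · by_cases h : x = p
        · right; rw [h, hc1p] at h5; rw [h, ← Option.some.inj h5]; exact hA
        · left; rw [← hc1 x h]; exact h5
      · exact Or.inr h5

lemma comb_col {α V : Type} (G : SimpleGraph V) (adj : α → α → Prop) (hs : ∀ x y, adj x y → adj y x)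
    (Bx : Finset α) (hBx : cnSet adj (Bx : Set α)) (Fr : Set α) (hFrB : Fr ⊆ Bx) (hFrn : Fr.Nonempty)
    (hFr : cnSet adj Fr) (R : V → Set α) (hRB : ∀ v, R v ⊆ Bx) (hRn : ∀ v, (R v).Nonempty)
    (hR : ∀ v, cnSet adj (R v)) (hRR : ∀ u v, u ≠ v → Disjoint (R u) (R v))
    (hRF : ∀ v, Disjoint (R v) Fr) (M : V → V → Set α)
    (hMB : ∀ u v, G.Adj u v → M u v ⊆ Bx)
    (hM : ∀ u v, G.Adj u v → cnSet adj (M u v)) (hMF : ∀ u v, G.Adj u v → Disjoint (M u v) Fr)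
    (hMu : ∀ u v, G.Adj u v → (M u v ∩ R u).Nonempty) (hMv : ∀ u v, G.Adj u v → (M u v ∩ R v).Nonempty)
    (hMR : ∀ u v w, G.Adj u v → w ≠ u → w ≠ v → Disjoint (M u v) (R w))
    (hMM : ∀ u v x y, G.Adj u v → G.Adj x y → s(u, v) ≠ s(x, y) → Disjoint (M u v) (M x y))
    (hV : Nonempty V) :
    ∃ (φ : α → V) (b : V), (∀ v, cnSet adj {p | p ∈ Bx ∧ φ p = v}) ∧
      (∀ v, ∀ p ∈ R v, φ p = v) ∧
      (∀ u w, G.Adj u w → ∃ p ∈ Bx, ∃ q ∈ Bx, adj p q ∧ φ p = u ∧ φ q = w) ∧ (∀ p ∈ Fr, φ p = b) := by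
  classical
  let c0 : α → Option (Option V) := fun p =>
    if p ∈ Fr then some none else if h : ∃ v, p ∈ R v then some (some h.choose) else none
  have c0F : ∀ p ∈ Fr, c0 p = some none := fun p hp => if_pos hp
  have c0R : ∀ v, ∀ p ∈ R v, c0 p = some (some v) := by
    intro v p hp
    have h1 : p ∉ Fr := fun h => Set.disjoint_left.mp (hRF v) hp h
    have h2 : ∃ v, p ∈ R v := ⟨v, hp⟩
    simp only [c0, if_neg h1, dif_pos h2]
    congr 2
    by_contra hne
    exact Set.disjoint_left.mp (hRR _ _ hne) h2.choose_spec hp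
  have c0n : ∀ p, c0 p = some none → p ∈ Fr := by
    intro p h
    by_contra hp
    simp only [c0, if_neg hp] at h
    split_ifs at h
    simp at h
  have c0s : ∀ p v, c0 p = some (some v) → p ∈ R v := by
    intro p v h
    simp only [c0] at h
    split_ifs at h with h1 h2
    · simp at h
    · have h4 := h2.choose_spec
      rw [Option.some.inj (Option.some.inj h)] at h4
      exact h4
  have hc0 : ∀ k, cnSet adj (cls Bx c0 k) := by
    intro k
    rcases k with _ | v
    · have : cls Bx c0 none = Fr := by
        ext p; exact ⟨fun h => c0n p h.2, fun h => ⟨hFrB h, c0F p h⟩⟩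
      rw [this]; exact hFr
    · have : cls Bx c0 (some v) = R v := by
        ext p; exact ⟨fun h => c0s p v h.2, fun h => ⟨hRB v h, c0R v p h⟩⟩
      rw [this]; exact hR v
  obtain ⟨c1, e1, cn1, a1, m1⟩ := ext_col adj hs Bx
    (fun k p => ∃ u w, k = some u ∧ G.Adj u w ∧ p ∈ M u w) _ c0 rfl hc0
  obtain ⟨c2, e2, cn2, -, m2⟩ := ext_col adj hs Bx (fun _ _ => True) _ c1 rfl cn1
  have hadj : ∀ u w, G.Adj u w → ∃ p ∈ Bx, ∃ q ∈ Bx, adj p q ∧ c1 p = some (some u) ∧ c1 q = some (some w) := by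
    intro u w huw
    obtain ⟨p0, hp0, hp0'⟩ := hMu u w huw
    obtain ⟨p1, hp1, hp1'⟩ := hMv u w huw
    have h1 : ∀ x, Relation.ReflTransGen (fun x y => adj x y ∧ x ∈ M u w ∧ y ∈ M u w) p0 x →
        c1 x = some (some u) ∨ ∃ p ∈ Bx, ∃ q ∈ Bx, adj p q ∧ c1 p = some (some u) ∧ c1 q = some (some w) := by
      intro x hx
      induction hx with
      | refl => left; exact e1 _ _ (c0R u p0 hp0')
      | @tail x y _ hxy ih =>
        rcases ih with ih | ih
        · have hyM := hxy.2.2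
          cases hy : c1 y with
          | none =>
            exact absurd ⟨u, w, rfl, huw, hyM⟩
              (m1 y (hMB u w huw hyM) x (hMB u w huw hxy.2.1) hy hxy.1 _ ih)
          | some k =>
            have hk : k = some u ∨ k = some w := by
              rcases a1 y k hy with h | ⟨u', w', rfl, h1, h2⟩
              · rcases k with _ | k
                · exact absurd (c0n y h) (Set.disjoint_left.mp (hMF u w huw) hyM)
                · have h2 := c0s y k h
                  by_contra hne
                  simp only [Option.some.injEq, not_or] at hne
                  exact Set.disjoint_left.mp (hMR u w k huw hne.1 hne.2) hyM h2
              · by_contra hne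
                simp only [Option.some.injEq, not_or] at hne
                refine Set.disjoint_left.mp (hMM u w u' w' huw h1 ?_) hyM h2
                intro h
                rcases Sym2.eq_iff.mp h with h | h
                · exact hne.1 h.1.symm
                · exact hne.2 h.2.symm
            rcases hk with rfl | rfl
            · exact Or.inl rfl
            · exact Or.inr ⟨x, hMB u w huw hxy.2.1, y, hMB u w huw hyM, hxy.1, ih, hy⟩
        · exact Or.inr ih
    rcases h1 p1 (hM u w huw p0 hp0 p1 hp1) with h | h
    · rw [e1 _ _ (c0R w p1 hp1')] at h
      simp only [Option.some.injEq] at h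
      exact absurd h huw.ne'
    · exact h
  obtain ⟨f0, hf0⟩ := hFrn
  have hf0c : c2 f0 = some none := e2 _ _ (e1 _ _ (c0F f0 hf0))
  have htot : ∀ p ∈ Bx, ∃ k, c2 p = some k := by
    intro p hp
    have := hBx f0 (hFrB hf0) p hp
    induction this with
    | refl => exact ⟨_, hf0c⟩
    | @tail x y _ hxy ih =>
      obtain ⟨k, hk⟩ := ih hxy.2.1
      by_contra hne
      push Not at hne
      have hy : c2 y = none := by
        cases h : c2 y with
        | none => rfl
        | some k => exact absurd h (hne k)
      exact m2 y hxy.2.2 x hxy.2.1 hy hxy.1 k hk trivial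
  obtain ⟨v0⟩ := hV
  obtain ⟨r0, hr0⟩ := hRn v0
  have hr0c : c2 r0 = some (some v0) := e2 _ _ (e1 _ _ (c0R v0 r0 hr0))
  have hlink : ∃ x ∈ Bx, ∃ y ∈ Bx, ∃ b, adj x y ∧ c2 x = some none ∧ c2 y = some (some b) := by
    have h1 : ∀ z, Relation.ReflTransGen (fun x y => adj x y ∧ x ∈ (Bx : Set α) ∧ y ∈ (Bx : Set α)) f0 z →
        c2 z = some none ∨ ∃ x ∈ Bx, ∃ y ∈ Bx, ∃ b, adj x y ∧ c2 x = some none ∧ c2 y = some (some b) := by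
      intro z hz
      induction hz with
      | refl => exact Or.inl hf0c
      | @tail x y _ hxy ih =>
        rcases ih with ih | ih
        · obtain ⟨k, hk⟩ := htot y hxy.2.2
          rcases k with _ | k
          · exact Or.inl hk
          · exact Or.inr ⟨x, hxy.2.1, y, hxy.2.2, k, hxy.1, ih, hk⟩
        · exact Or.inr ih
    rcases h1 r0 (hBx f0 (hFrB hf0) r0 (hRB v0 hr0)) with h | h
    · rw [hr0c] at h; simp at h
    · exact h
  obtain ⟨x, hx, y, hy, b, hxy, hxn, hyb⟩ := hlink
  let φ : α → V := fun p => ((c2 p).getD none).getD b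
  have φs : ∀ p v, c2 p = some (some v) → φ p = v := fun p v h => by simp [φ, h]
  have φn : ∀ p, c2 p = some none → φ p = b := fun p h => by simp [φ, h]
  have φc : ∀ p ∈ Bx, ∀ v, φ p = v → c2 p = some (some v) ∨ (c2 p = some none ∧ v = b) := by
    intro p hp v h
    obtain ⟨k, hk⟩ := htot p hp
    rcases k with _ | k
    · right; exact ⟨hk, by rw [← h, φn p hk]⟩
    · left; rw [hk, ← h, φs p k hk]
  have sub1 : ∀ v, cls Bx c2 (some v) ⊆ {p | p ∈ Bx ∧ φ p = v} := fun v p hp => ⟨hp.1, φs p v hp.2⟩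
  have sub2 : cls Bx c2 none ⊆ {p | p ∈ Bx ∧ φ p = b} := fun p hp => ⟨hp.1, φn p hp.2⟩
  refine ⟨φ, b, ?_, fun v p hp => φs p v (e2 _ _ (e1 _ _ (c0R v p hp))), ?_, fun p hp => φn p (e2 _ _ (e1 _ _ (c0F p hp)))⟩
  · intro v
    by_cases hvb : v = b
    · subst hvb
      have tox : ∀ p ∈ {p | p ∈ Bx ∧ φ p = v}, Relation.ReflTransGen
          (fun x y => adj x y ∧ x ∈ {p | p ∈ Bx ∧ φ p = v} ∧ y ∈ {p | p ∈ Bx ∧ φ p = v}) p x := by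
        intro p hp
        rcases φc p hp.1 v hp.2 with h | ⟨h, -⟩
        · exact (rtg_set_mono (sub1 v) (cn2 (some v) p ⟨hp.1, h⟩ y ⟨hy, hyb⟩)).tail
            ⟨hs _ _ hxy, ⟨hy, φs y v hyb⟩, ⟨hx, φn x hxn⟩⟩
        · exact rtg_set_mono sub2 (cn2 none p ⟨hp.1, h⟩ x ⟨hx, hxn⟩)
      intro p hp q hq
      exact (tox p hp).trans (rtg_set_symm hs (tox q hq))
    · intro p hp q hq
      have h1 := φc p hp.1 v hp.2
      have h2 := φc q hq.1 v hq.2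
      simp only [hvb, and_false, or_false] at h1 h2
      exact rtg_set_mono (sub1 v) (cn2 (some v) p ⟨hp.1, h1⟩ q ⟨hq.1, h2⟩)
  · intro u w huw
    obtain ⟨p, hp, q, hq, h1, h2, h3⟩ := hadj u w huw
    exact ⟨p, hp, q, hq, h1, φs p u (e2 _ _ h2), φs q w (e2 _ _ h3)⟩

lemma cn_line {T : Set ℕ} (hT : T.OrdConnected) : cnSet (fun i j => j = i + 1 ∨ i = j + 1) T := by
  have key : ∀ p ∈ T, ∀ k, p + k ∈ T →
      Relation.ReflTransGen (fun i j => (j = i + 1 ∨ i = j + 1) ∧ i ∈ T ∧ j ∈ T) p (p + k) := by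
    intro p hp k
    induction k with
    | zero => intro _; exact Relation.ReflTransGen.refl
    | succ k ih =>
      intro h
      have h1 : p + k ∈ T := hT.out hp h ⟨by omega, by omega⟩
      exact (ih h1).tail ⟨Or.inl (by omega), h1, h⟩
  intro p hp q hq
  rcases le_total p q with h | h
  · obtain ⟨k, rfl⟩ := Nat.exists_eq_add_of_le h
    exact key p hp k hq
  · obtain ⟨k, rfl⟩ := Nat.exists_eq_add_of_le h
    exact rtg_set_symm (fun _ _ h => h.symm) (key q hq k hp)

lemma rtg_map {α β : Type} {R : α → α → Prop} {S : β → β → Prop} (f : α → β)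
    (h : ∀ x y, R x y → S (f x) (f y)) {p q : α} (hpq : Relation.ReflTransGen R p q) :
    Relation.ReflTransGen S (f p) (f q) := by
  induction hpq with
  | refl => exact Relation.ReflTransGen.refl
  | tail _ h' ih => exact ih.tail (h _ _ h')

lemma cn_prod {I J : Set ℕ} (hI : I.OrdConnected) (hJ : J.OrdConnected) : cnSet gAdj (I ×ˢ J) := by
  rintro ⟨a, b⟩ ⟨ha, hb⟩ ⟨c, d⟩ ⟨hc, hd⟩
  have h1 := rtg_map (S := fun x y => gAdj x y ∧ x ∈ I ×ˢ J ∧ y ∈ I ×ˢ J) (fun i => (i, b))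
    (fun x y h => ⟨by rcases h.1 with h | h <;> simp [gAdj, h], ⟨h.2.1, hb⟩, ⟨h.2.2, hb⟩⟩) (cn_line hI a ha c hc)
  have h2 := rtg_map (S := fun x y => gAdj x y ∧ x ∈ I ×ˢ J ∧ y ∈ I ×ˢ J) (fun i => (c, i))
    (fun x y h => ⟨by rcases h.1 with h | h <;> simp [gAdj, h], ⟨hc, h.2.1⟩, ⟨hc, h.2.2⟩⟩) (cn_line hJ b hb d hd)
  exact h1.trans h2

/-- lattice point -/
noncomputable def gpt (h L : ℝ) (p : ℕ × ℕ) : ℝ × ℝ := (h * p.1 - L, h * p.2 - L)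

/-- discretised neighbourhood -/
def gD (h L δ : ℝ) (T : Set (ℝ × ℝ)) : Set (ℕ × ℕ) := {p | ∃ z ∈ T, dist (gpt h L p) z < δ}

lemma gball_cn (h L δ : ℝ) (hh : 0 < h) (z : ℝ × ℝ) : cnSet gAdj (gD h L δ {z}) := by
  have : gD h L δ {z} = {i : ℕ | |h * i - L - z.1| < δ} ×ˢ {i : ℕ | |h * i - L - z.2| < δ} := by
    ext ⟨i, j⟩
    constructor
    · rintro ⟨w, rfl, hw⟩
      rw [Prod.dist_eq, max_lt_iff] at hw
      exact hw
    · intro hw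
      refine ⟨z, rfl, ?_⟩
      rw [Prod.dist_eq, max_lt_iff]
      exact hw
  rw [this]
  have oc : ∀ c : ℝ, ({i : ℕ | |h * i - L - c| < δ}).OrdConnected := by
    intro c
    constructor
    rintro x hx y hy k ⟨h1, h2⟩
    have hx' : |h * x - L - c| < δ := hx
    have hy' : |h * y - L - c| < δ := hy
    show |h * k - L - c| < δ
    rw [abs_lt] at *
    have e1 : h * x ≤ h * k := mul_le_mul_of_nonneg_left (by exact_mod_cast h1) hh.le
    have e2 : h * k ≤ h * y := mul_le_mul_of_nonneg_left (by exact_mod_cast h2) hh.le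
    constructor <;> linarith
  exact cn_prod (oc _) (oc _)

lemma gball_ne (h L δ : ℝ) (hh : 0 < h) (hδ : h < δ) (z : ℝ × ℝ) (h1 : -L ≤ z.1) (h2 : -L ≤ z.2) :
    (gD h L δ {z}).Nonempty := by
  have key : ∀ c : ℝ, -L ≤ c → |h * (⌊(c + L) / h⌋₊ : ℝ) - L - c| < δ := by
    intro c hc
    have e0 : 0 ≤ (c + L) / h := div_nonneg (by linarith) hh.le
    have e1 := Nat.floor_le e0
    have e2 := Nat.lt_floor_add_one ((c + L) / h)
    rw [le_div_iff₀ hh] at e1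
    rw [div_lt_iff₀ hh] at e2
    rw [abs_lt]
    constructor <;> nlinarith
  refine ⟨(⌊(z.1 + L) / h⌋₊, ⌊(z.2 + L) / h⌋₊), z, rfl, ?_⟩
  rw [Prod.dist_eq, max_lt_iff]
  exact ⟨key _ h1, key _ h2⟩

lemma gD_mono {h L δ : ℝ} {T T' : Set (ℝ × ℝ)} (hT : T ⊆ T') : gD h L δ T ⊆ gD h L δ T' :=
  fun _ ⟨z, hz, hd⟩ => ⟨z, hT hz, hd⟩

lemma gD_cn (h L δ : ℝ) (hh : 0 < h) (hδ : h < δ) (T : Set (ℝ × ℝ)) (hT : IsPreconnected T)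
    (hL : ∀ z ∈ T, -L ≤ z.1 ∧ -L ≤ z.2) : cnSet gAdj (gD h L δ T) := by
  have main : ∀ x ∈ T, ∀ y ∈ T, ∀ p ∈ gD h L δ {x}, ∀ q ∈ gD h L δ {y},
      Relation.ReflTransGen (fun a b => gAdj a b ∧ a ∈ gD h L δ T ∧ b ∈ gD h L δ T) p q := by
    intro x hx y hy
    have hsub : ∀ z ∈ T, gD h L δ {z} ⊆ gD h L δ T := fun z hz => gD_mono (by simpa using hz)
    refine hT.induction₂ (fun x y => ∀ p ∈ gD h L δ {x}, ∀ q ∈ gD h L δ {y},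
      Relation.ReflTransGen (fun a b => gAdj a b ∧ a ∈ gD h L δ T ∧ b ∈ gD h L δ T) p q) ?_ ?_ ?_ hx hy
    · intro x hx
      obtain ⟨p0, w, rfl, hp0⟩ := gball_ne h L δ hh hδ x (hL x hx).1 (hL x hx).2
      have hev : ∀ᶠ y in nhds w, dist (gpt h L p0) y < δ :=
        (isOpen_lt (continuous_const.dist continuous_id) continuous_const).mem_nhds hp0
      filter_upwards [hev.filter_mono nhdsWithin_le_nhds, self_mem_nhdsWithin] with y hy hyT p hp q hq
      exact (rtg_set_mono (hsub w hx) (gball_cn h L δ hh w p hp p0 ⟨w, rfl, hp0⟩)).trans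
        (rtg_set_mono (hsub y hyT) (gball_cn h L δ hh y p0 ⟨y, rfl, hy⟩ q hq))
    · intro x y z _ hy _ h1 h2 p hp q hq
      obtain ⟨r, hr⟩ := gball_ne h L δ hh hδ y (hL y hy).1 (hL y hy).2
      exact (h1 p hp r hr).trans (h2 r hr q hq)
    · intro x y _ _ h1 p hp q hq
      exact rtg_set_symm (fun _ _ => gAdj_symm) (h1 q hq p hp)
  rintro p ⟨x, hx, hp⟩ q ⟨y, hy, hq⟩
  exact main x hx y hy p ⟨x, rfl, hp⟩ q ⟨y, rfl, hq⟩

lemma frame_cn (N : ℕ) (hN : 1 ≤ N) : cnSet gAdj {p : ℕ × ℕ | gBox N p ∧ (p.1 = 1 ∨ p.1 = N ∨ p.2 = 1 ∨ p.2 = N)} := by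
  set F : Set (ℕ × ℕ) := {p : ℕ × ℕ | gBox N p ∧ (p.1 = 1 ∨ p.1 = N ∨ p.2 = 1 ∨ p.2 = N)} with hF
  have hor : ∀ j, (j = 1 ∨ j = N) → cnSet gAdj ((Set.Icc 1 N) ×ˢ {j}) :=
    fun j _ => cn_prod Set.ordConnected_Icc Set.ordConnected_singleton
  have ver : ∀ j, (j = 1 ∨ j = N) → cnSet gAdj ({j} ×ˢ (Set.Icc 1 N)) :=
    fun j _ => cn_prod Set.ordConnected_singleton Set.ordConnected_Icc
  have horF : ∀ j, (j = 1 ∨ j = N) → ((Set.Icc 1 N) ×ˢ {j} : Set (ℕ × ℕ)) ⊆ F := by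
    rintro j hj ⟨a, b⟩ ⟨⟨h1, h2⟩, h3⟩
    simp only [Set.mem_singleton_iff] at h3
    dsimp only at h1 h2 h3
    refine ⟨⟨h1, h2, ?_⟩, ?_⟩ <;> dsimp only <;> omega
  have verF : ∀ j, (j = 1 ∨ j = N) → ({j} ×ˢ (Set.Icc 1 N) : Set (ℕ × ℕ)) ⊆ F := by
    rintro j hj ⟨a, b⟩ ⟨h3, ⟨h1, h2⟩⟩
    simp only [Set.mem_singleton_iff] at h3
    dsimp only at h1 h2 h3
    refine ⟨⟨?_, ?_, h1, h2⟩, ?_⟩ <;> dsimp only <;> omega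
  have toN : ∀ p ∈ F, Relation.ReflTransGen (fun x y => gAdj x y ∧ x ∈ F ∧ y ∈ F) p (1, 1) := by
    have H1 : ∀ a, 1 ≤ a → a ≤ N → Relation.ReflTransGen (fun x y => gAdj x y ∧ x ∈ F ∧ y ∈ F) (a, 1) (1, 1) :=
      fun a h1 h2 => rtg_set_mono (horF 1 (Or.inl rfl)) (hor 1 (Or.inl rfl) (a, 1) ⟨⟨h1, h2⟩, rfl⟩ (1, 1) ⟨⟨le_rfl, hN⟩, rfl⟩)
    have H2 : ∀ a, 1 ≤ a → a ≤ N → Relation.ReflTransGen (fun x y => gAdj x y ∧ x ∈ F ∧ y ∈ F) (1, a) (1, 1) :=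
      fun a h1 h2 => rtg_set_mono (verF 1 (Or.inl rfl)) (ver 1 (Or.inl rfl) (1, a) ⟨rfl, ⟨h1, h2⟩⟩ (1, 1) ⟨rfl, ⟨le_rfl, hN⟩⟩)
    rintro ⟨a, b⟩ ⟨⟨h1, h2, h3, h4⟩, h5⟩
    dsimp only at h1 h2 h3 h4 h5
    rcases h5 with rfl | rfl | rfl | rfl
    · exact H2 b h3 h4
    · exact (rtg_set_mono (verF a (Or.inr rfl)) (ver a (Or.inr rfl) (a, b) ⟨rfl, ⟨h3, h4⟩⟩ (a, 1) ⟨rfl, ⟨le_rfl, hN⟩⟩)).trans (H1 a h1 h2)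
    · exact H1 a h1 h2
    · exact (rtg_set_mono (horF b (Or.inr rfl)) (hor b (Or.inr rfl) (a, b) ⟨⟨h1, h2⟩, rfl⟩ (1, b) ⟨⟨le_rfl, hN⟩, rfl⟩)).trans (H2 b h3 h4)
  intro p hp q hq
  exact (toN p hp).trans (rtg_set_symm (fun _ _ => gAdj_symm) (toN q hq))

lemma unif_delta {ι : Type} [Finite ι] (A B : ι → Set (ℝ × ℝ)) (hA : ∀ i, IsCompact (A i))
    (hB : ∀ i, IsCompact (B i)) (hd : ∀ i, Disjoint (A i) (B i)) :
    ∃ δ > 0, ∀ i, Disjoint (Metric.thickening δ (A i)) (Metric.thickening δ (B i)) := by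
  have h : ∀ i, ∀ᶠ δ in nhdsWithin (0 : ℝ) (Set.Ioi 0),
      Disjoint (Metric.thickening δ (A i)) (Metric.thickening δ (B i)) := by
    intro i
    obtain ⟨δ, hδ, hD⟩ := (hd i).exists_thickenings (hA i) (hB i).isClosed
    filter_upwards [Ioo_mem_nhdsGT hδ] with x hx
    exact hD.mono (Metric.thickening_mono hx.2.le _) (Metric.thickening_mono hx.2.le _)
  have h2 := Filter.eventually_all.mpr h
  obtain ⟨δ, h3, h4⟩ := (h2.and self_mem_nhdsWithin).exists
  exact ⟨δ, h4, h3⟩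

lemma grid_of_sets {V : Type} [Fintype V] (G : SimpleGraph V) (hV : Nonempty V)
    (S : V → Set (ℝ × ℝ)) (M : V → V → Set (ℝ × ℝ))
    (hSc : ∀ v, IsCompact (S v)) (hSp : ∀ v, IsPreconnected (S v)) (hSn : ∀ v, (S v).Nonempty)
    (hMc : ∀ u v, G.Adj u v → IsCompact (M u v)) (hMp : ∀ u v, G.Adj u v → IsPreconnected (M u v))
    (hSS : ∀ u v, u ≠ v → Disjoint (S u) (S v))
    (hMu : ∀ u v, G.Adj u v → (M u v ∩ S u).Nonempty) (hMv : ∀ u v, G.Adj u v → (M u v ∩ S v).Nonempty)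
    (hMS : ∀ u v w, G.Adj u v → w ≠ u → w ≠ v → Disjoint (M u v) (S w))
    (hMM : ∀ u v x y, G.Adj u v → G.Adj x y → s(u, v) ≠ s(x, y) → Disjoint (M u v) (M x y)) :
    ∃ N φ b, GridColoring G N φ b := by
  classical
  let K := V ⊕ {p : V × V // G.Adj p.1 p.2}
  let C : K → Set (ℝ × ℝ) := Sum.elim S (fun p => M p.1.1 p.1.2)
  have hC : ∀ k, IsCompact (C k) := by
    rintro (v | ⟨p, hp⟩)
    · exact hSc v
    · exact hMc _ _ hp
  obtain ⟨δ, hδ, hD⟩ := unif_delta (ι := {kl : K × K // Disjoint (C kl.1) (C kl.2)})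
    (fun i => C i.1.1) (fun i => C i.1.2) (fun _ => hC _) (fun _ => hC _) (fun i => i.2)
  obtain ⟨r, hr⟩ := (isCompact_iUnion hC).isBounded.exists_norm_le
  have hr' : ∀ k, ∀ z ∈ C k, |z.1| ≤ r ∧ |z.2| ≤ r := by
    intro k z hz
    have := hr z (Set.mem_iUnion.mpr ⟨k, hz⟩)
    rw [Prod.norm_def, max_le_iff] at this
    exact this
  set h := δ / 2 with hh
  set L := r + 2 * δ with hL
  have hh0 : 0 < h := by positivity
  have hhδ : h < δ := by rw [hh]; linarith
  set N := ⌈(L + r + δ) / h⌉₊ + 2 with hN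
  have hNh : L + r + δ ≤ h * N := by
    have := Nat.le_ceil ((L + r + δ) / h)
    rw [div_le_iff₀ hh0] at this
    rw [hN]; push_cast; nlinarith
  have in1 : ∀ (c : ℝ) (i : ℕ), |c| ≤ r → |h * i - L - c| < δ → 1 < i ∧ i < N := by
    intro c i hc hi
    rw [abs_le] at hc
    rw [abs_lt] at hi
    constructor
    · have : h * 1 < h * i := by rw [hL] at hi; linarith
      exact_mod_cast lt_of_mul_lt_mul_left this hh0.le
    · have : h * i < h * N := by linarith
      exact_mod_cast lt_of_mul_lt_mul_left this hh0.le
  have inB : ∀ k, ∀ p ∈ gD h L δ (C k), (1 < p.1 ∧ p.1 < N) ∧ (1 < p.2 ∧ p.2 < N) := by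
    rintro k p ⟨z, hz, hd⟩
    rw [Prod.dist_eq, max_lt_iff] at hd
    exact ⟨in1 _ _ (hr' k z hz).1 hd.1, in1 _ _ (hr' k z hz).2 hd.2⟩
  have hlow : ∀ k, ∀ z ∈ C k, -L ≤ z.1 ∧ -L ≤ z.2 := by
    intro k z hz
    have := hr' k z hz
    rw [abs_le, abs_le] at this
    constructor <;> linarith [this.1.1, this.2.1]
  have disj : ∀ k l, Disjoint (C k) (C l) → Disjoint (gD h L δ (C k)) (gD h L δ (C l)) := by
    intro k l hkl
    have := hD ⟨(k, l), hkl⟩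
    rw [Set.disjoint_left] at this ⊢
    rintro p ⟨z, hz, hd⟩ ⟨w, hw, hd'⟩
    exact this (Metric.mem_thickening_iff.mpr ⟨z, hz, hd⟩) (Metric.mem_thickening_iff.mpr ⟨w, hw, hd'⟩)
  have meet : ∀ k l, (C k ∩ C l).Nonempty → (gD h L δ (C k) ∩ gD h L δ (C l)).Nonempty := by
    rintro k l ⟨z, hz, hz'⟩
    obtain ⟨p, hp⟩ := gball_ne h L δ hh0 hhδ z (hlow k z hz).1 (hlow k z hz).2
    exact ⟨p, gD_mono (by simpa using hz) hp, gD_mono (by simpa using hz') hp⟩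
  let Bx : Finset (ℕ × ℕ) := Finset.Icc 1 N ×ˢ Finset.Icc 1 N
  have hBxm : ∀ p, p ∈ Bx ↔ gBox N p := by
    intro p; simp [Bx, gBox, and_assoc]
  have hBx : cnSet gAdj (Bx : Set (ℕ × ℕ)) := by
    have := cn_prod (I := Set.Icc 1 N) (J := Set.Icc 1 N) Set.ordConnected_Icc Set.ordConnected_Icc
    simpa [Bx] using this
  set F : Set (ℕ × ℕ) := {p : ℕ × ℕ | gBox N p ∧ (p.1 = 1 ∨ p.1 = N ∨ p.2 = 1 ∨ p.2 = N)} with hF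
  have sB : ∀ k, gD h L δ (C k) ⊆ (Bx : Set (ℕ × ℕ)) := by
    intro k p hp
    have := inB k p hp
    rw [Finset.mem_coe, hBxm]
    unfold gBox; omega
  have sF : ∀ k, Disjoint (gD h L δ (C k)) F := by
    intro k
    rw [Set.disjoint_left]
    intro p hp hp'
    have := inB k p hp
    have h2 := hp'.2
    omega
  have cn : ∀ k, IsPreconnected (C k) → cnSet gAdj (gD h L δ (C k)) :=
    fun k hk => gD_cn h L δ hh0 hhδ _ hk (hlow k)
  obtain ⟨φ, b, h1, h2, h3, h4⟩ := comb_col G gAdj (fun _ _ => gAdj_symm) Bx hBx F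
    (fun p hp => by rw [Finset.mem_coe, hBxm]; exact hp.1)
    ⟨(1, 1), by refine ⟨?_, Or.inl rfl⟩; simp [gBox]; omega⟩
    (frame_cn N (by omega)) (fun v => gD h L δ (S v)) (fun v => sB (Sum.inl v))
    (fun v => by
      obtain ⟨z, hz⟩ := hSn v
      obtain ⟨p, hp, _⟩ := meet (Sum.inl v) (Sum.inl v) ⟨z, hz, hz⟩
      exact ⟨p, hp⟩)
    (fun v => cn (Sum.inl v) (hSp v))
    (fun u v huv => disj (Sum.inl u) (Sum.inl v) (hSS u v huv))
    (fun v => sF (Sum.inl v)) (fun u v => gD h L δ (M u v))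
    (fun u v huv => sB (Sum.inr ⟨(u, v), huv⟩))
    (fun u v huv => cn (Sum.inr ⟨(u, v), huv⟩) (hMp u v huv))
    (fun u v huv => sF (Sum.inr ⟨(u, v), huv⟩))
    (fun u v huv => meet (Sum.inr ⟨(u, v), huv⟩) (Sum.inl u) (hMu u v huv))
    (fun u v huv => meet (Sum.inr ⟨(u, v), huv⟩) (Sum.inl v) (hMv u v huv))
    (fun u v w huv h1 h2 => disj (Sum.inr ⟨(u, v), huv⟩) (Sum.inl w) (hMS u v w huv h1 h2))
    (fun u v x y huv hxy hne => disj (Sum.inr ⟨(u, v), huv⟩) (Sum.inr ⟨(x, y), hxy⟩) (hMM u v x y huv hxy hne))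
    hV
  refine ⟨N, φ, b, ?_, ?_, ?_, ?_⟩
  · intro p q hp hq hpq
    refine rtg_mono ?_ (h1 (φ q) p ⟨(hBxm p).mpr hp, hpq⟩ q ⟨(hBxm q).mpr hq, rfl⟩)
    rintro x y ⟨hxy, hx, hy⟩
    exact ⟨(hBxm y).mp hy.1, hxy, hy.2.trans hx.2.symm⟩
  · intro u
    obtain ⟨z, hz⟩ := hSn u
    obtain ⟨p, hp, _⟩ := meet (Sum.inl u) (Sum.inl u) ⟨z, hz, hz⟩
    exact ⟨p, (hBxm p).mp (sB (Sum.inl u) hp), h2 u p hp⟩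
  · intro u w huw
    obtain ⟨p, hp, q, hq, h5⟩ := h3 u w huw
    exact ⟨p, q, (hBxm p).mp hp, (hBxm q).mp hq, h5⟩
  · intro p hp hp'
    exact h4 p ⟨hp, hp'⟩

lemma arc_eq {V : Type} {G : SimpleGraph V} (E : PlaneEmbedding G) {u u' v v' : V} (hu : G.Adj u u')
    (hv : G.Adj v v') {t s : ℝ} (ht : t ∈ Set.Ioo (0 : ℝ) 1) (hs : s ∈ Set.Ioo (0 : ℝ) 1)
    (h : E.arc u u' t = E.arc v v' s) : (u = v ∧ u' = v' ∧ t = s) ∨ (u = v' ∧ u' = v ∧ t = 1 - s) := by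
  have hti := Set.Ioo_subset_Icc_self ht
  have hsi := Set.Ioo_subset_Icc_self hs
  by_cases he : s(u, u') = s(v, v')
  · rcases Sym2.eq_iff.mp he with ⟨rfl, rfl⟩ | ⟨rfl, rfl⟩
    · exact Or.inl ⟨rfl, rfl, E.arc_injOn hu hti hsi h⟩
    · right
      refine ⟨rfl, rfl, ?_⟩
      rw [E.arc_symm hu] at h
      exact E.arc_injOn hu hti ⟨by linarith [hsi.2], by linarith [hsi.1]⟩ h
  · exfalso
    have := E.arc_meet hu hv he ⟨⟨t, hti, rfl⟩, ⟨s, hsi, h.symm⟩⟩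
    rcases this.1 with h1 | h1
    · exact E.arc_avoid hu u ⟨t, ht, h1⟩
    · exact E.arc_avoid hu u' ⟨t, ht, h1⟩

lemma grid_of_planar {V : Type} [Fintype V] (G : SimpleGraph V) (hV : Nonempty V) (hG : IsPlanar G) :
    ∃ N φ b, GridColoring G N φ b := by
  obtain ⟨E⟩ := hG
  let S : V → Set (ℝ × ℝ) := fun v => {E.pos v} ∪ ⋃ u, ⋃ _ : G.Adj v u, E.arc v u '' Set.Icc 0 (1 / 3)
  let M : V → V → Set (ℝ × ℝ) := fun u v => E.arc u v '' Set.Icc (1 / 3) (2 / 3)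
  have memS : ∀ v z, z ∈ S v → z = E.pos v ∨ ∃ u, ∃ _ : G.Adj v u, ∃ t : ℝ, 0 < t ∧ t ≤ 1 / 3 ∧ E.arc v u t = z := by
    rintro v z (hz | hz)
    · exact Or.inl hz
    · simp only [Set.mem_iUnion] at hz
      obtain ⟨u, hu, t, ht, rfl⟩ := hz
      rcases ht.1.eq_or_lt with h0 | h0
      · left; rw [← h0, E.arc_zero hu]
      · right; exact ⟨u, hu, t, h0, ht.2, rfl⟩
  have Smem : ∀ v u, G.Adj v u → ∀ t ∈ Set.Icc (0 : ℝ) (1 / 3), E.arc v u t ∈ S v := by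
    intro v u h t ht
    right
    simp only [Set.mem_iUnion]
    exact ⟨u, h, t, ht, rfl⟩
  refine grid_of_sets G hV S M ?_ ?_ ?_ ?_ ?_ ?_ ?_ ?_ ?_ ?_
  · intro v
    exact isCompact_singleton.union (isCompact_iUnion fun u => isCompact_iUnion fun h =>
      isCompact_Icc.image (E.arc_cont h))
  · intro v
    apply isPreconnected_of_forall (E.pos v)
    rintro z (hz | hz)
    · exact ⟨{E.pos v}, Set.subset_union_left, rfl, hz, isPreconnected_singleton⟩
    · simp only [Set.mem_iUnion] at hz
      obtain ⟨u, hu, hz⟩ := hz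
      refine ⟨E.arc v u '' Set.Icc 0 (1 / 3), ?_, ⟨0, by norm_num, E.arc_zero hu⟩, hz,
        isPreconnected_Icc.image _ (E.arc_cont hu).continuousOn⟩
      rintro _ ⟨t, ht, rfl⟩
      exact Smem v u hu t ht
  · intro v; exact ⟨E.pos v, Or.inl rfl⟩
  · intro u v h; exact isCompact_Icc.image (E.arc_cont h)
  · intro u v h; exact isPreconnected_Icc.image _ (E.arc_cont h).continuousOn
  · intro u v huv
    rw [Set.disjoint_left]
    intro z hz hz'
    rcases memS u z hz with rfl | ⟨x, hx, t, t0, t1, rfl⟩ <;>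
    rcases memS v _ hz' with h | ⟨y, hy, s, s0, s1, h⟩
    · exact huv (E.pos_inj h)
    · exact E.arc_avoid hy u ⟨s, ⟨s0, by linarith⟩, h⟩
    · exact E.arc_avoid hx v ⟨t, ⟨t0, by linarith⟩, h⟩
    · rcases arc_eq E hx hy ⟨t0, by linarith⟩ ⟨s0, by linarith⟩ h.symm with ⟨h1, -, -⟩ | ⟨-, -, h1⟩
      · exact huv h1
      · linarith
  · intro u v h
    exact ⟨E.arc u v (1 / 3), ⟨1 / 3, by norm_num, rfl⟩, Smem u v h _ (by norm_num)⟩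
  · intro u v h
    refine ⟨E.arc u v (2 / 3), ⟨2 / 3, by norm_num, rfl⟩, ?_⟩
    have := E.arc_symm h (1 / 3)
    rw [show (1 : ℝ) - 1 / 3 = 2 / 3 by norm_num] at this
    rw [← this]
    exact Smem v u h.symm _ (by norm_num)
  · intro u v w h hu hv
    rw [Set.disjoint_left]
    rintro _ ⟨t, ht, rfl⟩ hz'
    have ht' : t ∈ Set.Ioo (0 : ℝ) 1 := ⟨by linarith [ht.1], by linarith [ht.2]⟩
    rcases memS w _ hz' with h' | ⟨y, hy, s, s0, s1, h'⟩
    · exact E.arc_avoid h w ⟨t, ht', h'⟩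
    · rcases arc_eq E h hy ht' ⟨s0, by linarith⟩ h'.symm with ⟨h1, -, -⟩ | ⟨-, h1, -⟩
      · exact hu h1.symm
      · exact hv h1.symm
  · intro u v x y h h' hne
    rw [Set.disjoint_left]
    rintro _ ⟨t, ht, rfl⟩ ⟨s, hs, hz⟩
    rcases arc_eq E h h' ⟨by linarith [ht.1], by linarith [ht.2]⟩ ⟨by linarith [hs.1], by linarith [hs.2]⟩
      hz.symm with ⟨rfl, rfl, -⟩ | ⟨rfl, rfl, -⟩
    · exact hne rfl
    · exact hne Sym2.eq_swap

open Classical in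
/-- neighbours of x inside H -/
noncomputable def nb {V : Type} (G : SimpleGraph V) (H : Finset V) (x : V) : Finset V := {y ∈ H | G.Adj x y}

lemma mem_nb {V : Type} {G : SimpleGraph V} {H : Finset V} {x y : V} : y ∈ nb G H x ↔ y ∈ H ∧ G.Adj x y := by
  simp [nb]

/-- peeling data: H is what remains, the rest hangs off H as a rooted forest -/
structure Peel {V : Type} (G : SimpleGraph V) (H : Finset V) (par top : V → V) (rk : V → ℕ) : Prop where
  par_rk : ∀ v, v ∉ H → par v ∉ H → rk v < rk (par v)
  nbp : ∀ v w, v ∉ H → G.Adj v w → w = par v ∨ (w ∉ H ∧ par w = v)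
  top_mem : ∀ v, top v ∈ H
  top_H : ∀ v ∈ H, top v = v
  top_par : ∀ v, v ∉ H → top v = top (par v)

open Classical in
lemma peel_step {V : Type} [Fintype V] (G : SimpleGraph V) (H : Finset V) (par top : V → V) (rk : V → ℕ)
    (hP : Peel G H par top rk) (v u : V) (hv : v ∈ H) (hnb : nb G H v = {u}) :
    Peel G (H.erase v) (Function.update par v u) (fun w => if top w = v then u else top w)
      (Function.update rk v (Finset.univ.sup rk + 1)) := by
  have hu : u ∈ H ∧ G.Adj v u := by rw [← mem_nb, hnb]; simp
  have huv : u ≠ v := hu.2.ne'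
  constructor
  · intro x hx hpx
    by_cases hxv : x = v
    · subst hxv
      rw [Function.update_self] at hpx
      exact absurd (Finset.mem_erase.mpr ⟨huv, hu.1⟩) hpx
    · have hxH : x ∉ H := fun h => hx (Finset.mem_erase.mpr ⟨hxv, h⟩)
      rw [Function.update_of_ne hxv] at hpx ⊢
      rw [Function.update_of_ne hxv]
      by_cases hpv : par x = v
      · rw [hpv, Function.update_self]
        have := Finset.le_sup (f := rk) (Finset.mem_univ x)
        omega
      · rw [Function.update_of_ne hpv]
        exact hP.par_rk x hxH (fun h => hpx (Finset.mem_erase.mpr ⟨hpv, h⟩))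
  · intro x w hx hxw
    by_cases hxv : x = v
    · subst hxv
      rw [Function.update_self]
      by_cases hw : w ∈ H
      · left
        have : w ∈ nb G H x := mem_nb.mpr ⟨hw, hxw⟩
        rw [hnb] at this; simpa using this
      · right
        rcases hP.nbp w x hw hxw.symm with h | h
        · refine ⟨fun h => hw (Finset.mem_of_mem_erase h), ?_⟩
          rw [Function.update_of_ne hxw.ne', h]
        · exact absurd hv h.1
    · have hxH : x ∉ H := fun h => hx (Finset.mem_erase.mpr ⟨hxv, h⟩)
      rw [Function.update_of_ne hxv]
      rcases hP.nbp x w hxH hxw with h | h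
      · exact Or.inl h
      · right
        refine ⟨fun h' => h.1 (Finset.mem_of_mem_erase h'), ?_⟩
        rw [Function.update_of_ne (show w ≠ v from fun e => h.1 (by rw [e]; exact hv))]
        exact h.2
  · intro x
    split_ifs with h
    · exact Finset.mem_erase.mpr ⟨huv, hu.1⟩
    · exact Finset.mem_erase.mpr ⟨h, hP.top_mem x⟩
  · intro x hx
    have hx' := Finset.mem_erase.mp hx
    rw [hP.top_H x hx'.2, if_neg hx'.1]
  · intro x hx
    by_cases hxv : x = v
    · subst hxv
      rw [Function.update_self, hP.top_H x hv, if_pos rfl, hP.top_H u hu.1, if_neg huv]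
    · have hxH : x ∉ H := fun h => hx (Finset.mem_erase.mpr ⟨hxv, h⟩)
      rw [Function.update_of_ne hxv, ← hP.top_par x hxH]

open Classical in
lemma peel_sum {V : Type} [Fintype V] (G : SimpleGraph V) (H : Finset V) (v u : V) (hv : v ∈ H)
    (hnb : nb G H v = {u}) :
    ∑ x ∈ H.erase v, (nb G (H.erase v) x).card + 2 = ∑ x ∈ H, (nb G H x).card := by
  rw [← Finset.add_sum_erase H _ hv, hnb, Finset.card_singleton]
  have h1 : ∀ x ∈ H.erase v, (nb G H x).card = (nb G (H.erase v) x).card + if x = u then 1 else 0 := by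
    intro x hx
    have hx' := Finset.mem_erase.mp hx
    have h2 : nb G (H.erase v) x = (nb G H x).erase v := by
      ext y; simp only [mem_nb, Finset.mem_erase, and_assoc]
    rw [h2]
    have h3 : v ∈ nb G H x ↔ x = u := by
      have : x ∈ nb G H v ↔ x = u := by rw [hnb]; simp
      rw [← this, mem_nb, mem_nb, G.adj_comm]
      simp [hv, hx'.2]
    by_cases hxu : x = u
    · rw [if_pos hxu, Finset.card_erase_add_one (h3.mpr hxu)]
    · rw [if_neg hxu, Finset.erase_eq_of_notMem (fun h => hxu (h3.mp h))]; rfl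
  rw [Finset.sum_congr rfl h1, Finset.sum_add_distrib, Finset.sum_ite_eq' ]
  have hu : u ∈ H ∧ G.Adj v u := by rw [← mem_nb, hnb]; simp
  rw [if_pos (Finset.mem_erase.mpr ⟨hu.2.ne', hu.1⟩)]
  ring

open Classical in
lemma exists_core {V : Type} [Fintype V] (G : SimpleGraph V) (hc : G.Connected)
    (m : ℕ) (hm : ∑ x, (nb G univ x).card = 2 * m) (hmn : Fintype.card V ≤ m) :
    ∃ H par top rk, Peel G H par top rk ∧ (∀ v ∈ H, 2 ≤ (nb G H v).card) ∧
      ∑ x ∈ H, (nb G H x).card + 2 * Hᶜ.card = 2 * m := by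
  let Q : ℕ → Prop := fun k => ∃ H par top rk, H.card = k ∧ Peel G H par top rk ∧
    ∑ x ∈ H, (nb G H x).card + 2 * Hᶜ.card = 2 * m ∧
    ∀ A ⊆ H, A.Nonempty → A ≠ H → ∃ a ∈ A, ∃ b ∈ H, b ∉ A ∧ G.Adj a b
  have hQ : ∃ k, Q k := by
    refine ⟨_, univ, id, id, fun _ => 0, rfl, ⟨by simp, by simp, by simp, by simp, by simp⟩, by simpa using hm, ?_⟩
    intro A _ hA hAu
    obtain ⟨a, ha⟩ := hA
    have : ∃ b, b ∉ A := by
      by_contra h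
      push Not at h
      exact hAu (Finset.eq_univ_iff_forall.mpr h)
    obtain ⟨b, hb⟩ := this
    obtain ⟨p⟩ := hc.preconnected a b
    obtain ⟨d, _, hd1, hd2⟩ := p.exists_boundary_dart (A : Set V) ha hb
    exact ⟨d.fst, hd1, d.snd, Finset.mem_univ _, hd2, d.adj⟩
  obtain ⟨H, par, top, rk, hk, hP, hs, hcon⟩ := Nat.find_spec hQ
  have hmin := fun k => Nat.find_min hQ (m := k)
  rw [← hk] at hmin
  refine ⟨H, par, top, rk, hP, ?_, hs⟩
  intro v hv
  by_contra hlt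
  have hcard : H.card + Hᶜ.card = Fintype.card V := Finset.card_add_card_compl H
  have h01 : (nb G H v).card = 0 ∨ (nb G H v).card = 1 := by omega
  rcases h01 with h0 | h1
  · by_cases hH : H = {v}
    · subst hH
      rw [Finset.sum_singleton, h0] at hs
      rw [Finset.card_singleton] at hcard
      omega
    · obtain ⟨a, ha, b, hb, _, hab⟩ := hcon {v} (by simpa using hv) ⟨v, by simp⟩ (fun h => hH h.symm)
      rw [Finset.mem_singleton] at ha
      subst ha
      have : b ∈ nb G H a := mem_nb.mpr ⟨hb, hab⟩
      rw [Finset.card_eq_zero.mp h0] at this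
      simp at this
  · obtain ⟨u, hu⟩ := Finset.card_eq_one.mp h1
    have hum : u ∈ H ∧ G.Adj v u := by rw [← mem_nb, hu]; simp
    have honly : ∀ b ∈ H, G.Adj v b → b = u := by
      intro b hb hvb
      have : b ∈ nb G H v := mem_nb.mpr ⟨hb, hvb⟩
      rw [hu] at this; simpa using this
    have hce : (H.erase v).card + 1 = H.card := Finset.card_erase_add_one hv
    refine hmin (H.erase v).card (by omega)
      ⟨_, _, _, _, rfl, peel_step G H par top rk hP v u hv hu, ?_, ?_⟩
    · have h3 : (H.erase v).card + (H.erase v)ᶜ.card = Fintype.card V := Finset.card_add_card_compl _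
      have := peel_sum G H v u hv hu
      omega
    · intro A hA hAn hAne
      have hvA : v ∉ A := fun h => by simpa using hA h
      by_cases huA : u ∈ A
      · obtain ⟨a, ha, b, hb, hbA, hab⟩ := hcon (insert v A)
          (Finset.insert_subset hv (hA.trans (Finset.erase_subset _ _))) ⟨v, by simp⟩
          (by rintro h; apply hAne; rw [← h, Finset.erase_insert hvA])
        rw [Finset.mem_insert, not_or] at hbA
        rcases Finset.mem_insert.mp ha with rfl | ha
        · exact absurd (honly b hb hab ▸ huA) hbA.2
        · exact ⟨a, ha, b, Finset.mem_erase.mpr ⟨hbA.1, hb⟩, hbA.2, hab⟩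
      · obtain ⟨a, ha, b, hb, hbA, hab⟩ := hcon A (hA.trans (Finset.erase_subset _ _)) hAn
          (by rintro rfl; exact hvA hv)
        refine ⟨a, ha, b, Finset.mem_erase.mpr ⟨?_, hb⟩, hbA, hab⟩
        rintro rfl
        have := honly a (Finset.mem_of_mem_erase (hA ha)) hab.symm
        exact huA (this ▸ ha)

open Classical in
lemma sn_sched {V : Type} [Fintype V] (G : SimpleGraph V) (v : V) (B : Finset V) (τ : V → ℕ)
    (P : ℕ → Finset V) (hP : ∀ t, (P t).card ≤ 2) (hd : ∀ t, ∀ x ∈ P t, x ∉ B) (hv : v ∈ B) (hv0 : τ v = 0)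
    (step : ∀ x ∈ B, ∀ y, G.Adj x y → (y ∈ B ∧ τ y ≤ τ x + 1) ∨ ∃ s ≤ τ x, y ∈ P s) :
    Fintype.card V ≤ sn G (fun _ => 2) v + B.card := by
  have key : ∀ t, ∀ x ∈ burnedSet G v (fun t => (P t : Set V)) t, x ∈ B ∧ τ x ≤ t := by
    intro t
    induction t with
    | zero =>
      intro x hx
      have : x = v := hx
      subst this
      exact ⟨hv, hv0.le⟩
    | succ t ih =>
      rintro x (hx | ⟨⟨u, hu, hux⟩, hx⟩)
      · exact ⟨(ih x hx).1, (ih x hx).2.trans (Nat.le_succ t)⟩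
      · have hu' := ih u hu
        rcases step u hu'.1 x hux with h | ⟨s, hs, h⟩
        · exact ⟨h.1, by omega⟩
        · exact absurd h (hx s (by omega))
  have h := sn_ge G (fun _ => 2) v (fun t => (P t : Set V)) (by
    intro t
    refine ⟨Finset.finite_toSet _, ?_, ?_⟩
    · rw [Set.ncard_coe_finset]; exact hP t
    · rw [Set.disjoint_left]
      intro x hx hx'
      exact hd t x hx (key t x hx').1) Bᶜ (by
    intro w hw t hwt
    exact (Finset.mem_compl.mp hw) (key t w hwt).1)
  have := Finset.card_add_card_compl B
  omega

section
set_option linter.unusedSectionVars false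
variable {V : Type} [Fintype V] {G : SimpleGraph V} {H : Finset V} {par top : V → V} {rk : V → ℕ}

lemma top_adj (hP : Peel G H par top rk) {x y : V} (h : G.Adj x y) : top x = top y ∨ (x ∈ H ∧ y ∈ H) := by
  by_cases hx : x ∈ H
  · by_cases hy : y ∈ H
    · exact Or.inr ⟨hx, hy⟩
    · left
      rcases hP.nbp y x hy h.symm with h | h
      · rw [hP.top_par y hy, h]
      · exact absurd hx h.1
  · left
    rcases hP.nbp x y hx h with h | h
    · rw [hP.top_par x hx, h]
    · rw [hP.top_par y h.1, h.2]

open Classical in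
/-- hanging vertices at v -/
noncomputable def pend (H : Finset V) (top : V → V) (v : V) : Finset V := {w ∈ Hᶜ | top w = v}

lemma mem_pend {v w : V} : w ∈ pend H top v ↔ w ∉ H ∧ top w = v := by
  simp [pend]

open Classical in
lemma pend_sum (hP : Peel G H par top rk) : ∑ v ∈ H, (pend H top v).card = Hᶜ.card := by
  rw [Finset.card_eq_sum_card_fiberwise (f := top) (t := H) (s := Hᶜ) (fun x _ => hP.top_mem x)]
  rfl

open Classical in
/-- a schedule inside the core -/
lemma sn_core (hP : Peel G H par top rk) (v : V) (C : Finset V) (hC : C ⊆ H) (τ : V → ℕ)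
    (P : ℕ → Finset V) (hPc : ∀ t, (P t).card ≤ 2) (hd : ∀ t, ∀ x ∈ P t, x ∈ H ∧ x ∉ C) (hv : v ∈ C) (hv0 : τ v = 0)
    (step : ∀ x ∈ C, ∀ y ∈ H, G.Adj x y → (y ∈ C ∧ τ y ≤ τ x + 1) ∨ ∃ s ≤ τ x, y ∈ P s) :
    Fintype.card V ≤ sn G (fun _ => 2) v + (C.card + ∑ c ∈ C, (pend H top c).card) := by
  have h := sn_sched G v (C ∪ C.biUnion (pend H top)) (fun x => τ (top x)) P hPc ?_ ?_ ?_ ?_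
  · refine h.trans (Nat.add_le_add_left ((Finset.card_union_le _ _).trans
      (Nat.add_le_add_left Finset.card_biUnion_le _)) _)
  · intro t x hx hx'
    rcases Finset.mem_union.mp hx' with h | h
    · exact (hd t x hx).2 h
    · obtain ⟨c, _, h⟩ := Finset.mem_biUnion.mp h
      exact (mem_pend.mp h).1 (hd t x hx).1
  · exact Finset.mem_union_left _ hv
  · rw [hP.top_H v (hC hv), hv0]
  · have hB : ∀ x, x ∈ C ∪ C.biUnion (pend H top) ↔ top x ∈ C := by
      intro x
      rw [Finset.mem_union, Finset.mem_biUnion]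
      constructor
      · rintro (h | ⟨c, hc, h⟩)
        · rw [hP.top_H x (hC h)]; exact h
        · rw [(mem_pend.mp h).2]; exact hc
      · intro h
        by_cases hx : x ∈ H
        · left; rw [hP.top_H x hx] at h; exact h
        · exact Or.inr ⟨_, h, mem_pend.mpr ⟨hx, rfl⟩⟩
    intro x hx y hxy
    rw [hB] at hx ⊢
    rcases top_adj hP hxy with h | ⟨h1, h2⟩
    · left; rw [← h]; exact ⟨hx, Nat.le_succ _⟩
    · rw [hP.top_H x h1] at hx ⊢
      rw [hP.top_H y h2]
      exact step x hx y h2 hxy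

lemma sn_deg2 (hP : Peel G H par top rk) (v : V) (hv : v ∈ H) (h2 : (nb G H v).card ≤ 2) :
    Fintype.card V ≤ sn G (fun _ => 2) v + (1 + (pend H top v).card) := by
  have := sn_core hP v {v} (by simpa using hv) (fun _ => 0) (fun _ => nb G H v) (fun _ => h2) ?_
    (by simp) rfl ?_
  · simpa using this
  · intro _ x hx
    have := mem_nb.mp hx
    refine ⟨this.1, ?_⟩
    rw [Finset.mem_singleton]
    exact this.2.ne'
  · intro x hx y hy hxy
    rw [Finset.mem_singleton] at hx
    subst hx
    exact Or.inr ⟨0, le_rfl, mem_nb.mpr ⟨hy, hxy⟩⟩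

lemma sn_deg3 (hP : Peel G H par top rk) (hc : G.Connected) (N : ℕ) (φ : ℕ × ℕ → V) (b : V)
    (hφ : GridColoring G N φ b) (v : V) (hv : v ∈ H) (h3 : (nb G H v).card ≤ 3) :
    Fintype.card V ≤ 3 * sn G (fun _ => 2) v + 1 + (pend H top v).card := by
  have := part_B G hc N φ b hφ v (pend H top v : Set V) ?_ ?_
  · rwa [Set.ncard_coe_finset] at this
  · intro z hz y hzy
    have hz' := mem_pend.mp hz
    by_cases hy : y ∈ H
    · right
      rcases top_adj hP hzy with h | h
      · rw [← hP.top_H y hy, ← h, hz'.2]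
      · exact absurd h.1 hz'.1
    · left
      refine mem_pend.mpr ⟨hy, ?_⟩
      rcases top_adj hP hzy with h | h
      · rw [← h, hz'.2]
      · exact absurd h.1 hz'.1
  · refine le_trans ?_ h3
    rw [← Set.ncard_coe_finset]
    refine Set.ncard_le_ncard ?_ (Finset.finite_toSet _)
    rintro w ⟨hvw, hw⟩
    refine Finset.mem_coe.mpr (mem_nb.mpr ⟨?_, hvw⟩)
    by_contra hwH
    apply hw
    refine mem_pend.mpr ⟨hwH, ?_⟩
    rcases top_adj hP hvw with h | h
    · rw [← h, hP.top_H v hv]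
    · exact absurd h.2 hwH

end

/-- parent relation in the hanging forest -/
def pR {V : Type} (H : Finset V) (par : V → V) (a b : V) : Prop := a ∉ H ∧ b ∉ H ∧ par a = b

open Classical in
/-- a chosen child -/
noncomputable def hch {V : Type} (H : Finset V) (par : V → V) (v : V) : V :=
  if h : ∃ c, pR H par c v then h.choose else v

lemma hch_spec {V : Type} {H : Finset V} {par : V → V} {v : V} (h : ∃ c, pR H par c v) :
    pR H par (hch H par v) v := by
  unfold hch; rw [dif_pos h]; exact h.choose_spec

open Classical in
/-- vertices lost below v -/
noncomputable def lossS {V : Type} [Fintype V] (H : Finset V) (par : V → V) (v : V) : Finset V :=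
  {w | Relation.TransGen (pR H par) w v ∧ ¬ Relation.ReflTransGen (pR H par) w (hch H par v)}

lemma mem_lossS {V : Type} [Fintype V] {H : Finset V} {par : V → V} {v w : V} : w ∈ lossS H par v ↔
    Relation.TransGen (pR H par) w v ∧ ¬ Relation.ReflTransGen (pR H par) w (hch H par v) := by
  simp [lossS]

section
set_option linter.unusedSectionVars false
variable {V : Type} [Fintype V] {G : SimpleGraph V} {H : Finset V} {par top : V → V} {rk : V → ℕ}

lemma tg_rk (hP : Peel G H par top rk) {a b : V} (h : Relation.TransGen (pR H par) a b) : rk a < rk b := by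
  have h1 : ∀ a b, pR H par a b → rk a < rk b := by
    rintro a b ⟨ha, hb, rfl⟩; exact hP.par_rk a ha hb
  induction h with
  | single h => exact h1 _ _ h
  | tail _ h ih => exact ih.trans (h1 _ _ h)

lemma tg_mem {a b : V} (h : Relation.TransGen (pR H par) a b) : a ∉ H ∧ b ∉ H := by
  induction h with
  | single h => exact ⟨h.1, h.2.1⟩
  | tail _ h ih => exact ⟨ih.1, h.2.1⟩

lemma tg_child {v w : V} (h : Relation.TransGen (pR H par) w v) : ∃ c, pR H par c v := by
  cases h with
  | single h => exact ⟨_, h⟩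
  | tail _ h => exact ⟨_, h⟩

lemma tg_par {v w : V} (h : Relation.TransGen (pR H par) w v) : Relation.ReflTransGen (pR H par) (par w) v := by
  obtain ⟨z, hz, hzv⟩ := Relation.TransGen.head'_iff.mp h
  rw [hz.2.2]; exact hzv

lemma tg_step {v w : V} (h : Relation.TransGen (pR H par) w v) : pR H par w (par w) := by
  obtain ⟨z, hz, hzv⟩ := Relation.TransGen.head'_iff.mp h
  rw [hz.2.2]; exact hz

open Classical in
lemma sn_pend (hP : Peel G H par top rk) (v : V) (hv : v ∉ H) :
    Fintype.card V ≤ sn G (fun _ => 2) v + (1 + (lossS H par v).card) := by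
  have irr : ∀ a, ¬ Relation.TransGen (pR H par) a a := fun a h => (tg_rk hP h).ne rfl
  let Q : Finset V := if ∃ c, pR H par c v then {par v, hch H par v} else {par v}
  have hQc : Q.card ≤ 2 := by
    simp only [Q]; split_ifs
    · exact Finset.card_le_two
    · simp
  have hQp : par v ∈ Q := by simp only [Q]; split_ifs <;> simp
  have hvp : pR H par v (par v) ∨ par v ∈ H := by
    by_cases h : par v ∈ H
    · exact Or.inr h
    · exact Or.inl ⟨hv, h, rfl⟩
  have hpB : par v ∉ insert v (lossS H par v) := by
    rw [Finset.mem_insert, mem_lossS]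
    rintro (h | h)
    · rcases hvp with h' | h'
      · rw [h] at h'; exact irr v (Relation.TransGen.single h')
      · exact hv (h ▸ h')
    · rcases hvp with h' | h'
      · exact irr v (Relation.TransGen.head h' h.1)
      · exact (tg_mem h.1).1 h'
  have main := sn_sched G v (insert v (lossS H par v)) (fun _ => 0) (fun _ => Q) (fun _ => hQc) ?_ (by simp) rfl ?_
  · refine main.trans (Nat.add_le_add_left ((Finset.card_insert_le _ _).trans (by omega)) _)
  · intro _ x hx
    by_cases hc : ∃ c, pR H par c v
    · simp only [Q, if_pos hc, Finset.mem_insert, Finset.mem_singleton] at hx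
      rcases hx with rfl | rfl
      · exact hpB
      · have hs := hch_spec hc
        rw [Finset.mem_insert, mem_lossS]
        rintro (h | h)
        · rw [h] at hs; exact irr v (Relation.TransGen.single hs)
        · exact h.2 Relation.ReflTransGen.refl
    · simp only [Q, if_neg hc, Finset.mem_singleton] at hx
      rw [hx]; exact hpB
  · intro x hx y hxy
    have goal : ∀ y, Relation.TransGen (pR H par) y v →
        (Relation.ReflTransGen (pR H par) y (hch H par v) → y = hch H par v) →
        (y ∈ insert v (lossS H par v) ∧ 0 ≤ 0 + 1) ∨ ∃ s ≤ 0, y ∈ Q := by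
      intro y hy h
      by_cases hh : Relation.ReflTransGen (pR H par) y (hch H par v)
      · right
        refine ⟨0, le_rfl, ?_⟩
        simp only [Q, if_pos (tg_child hy), h hh]; simp
      · left
        exact ⟨Finset.mem_insert_of_mem (mem_lossS.mpr ⟨hy, hh⟩), Nat.zero_le _⟩
    rcases Finset.mem_insert.mp hx with rfl | hx
    · rcases hP.nbp x y hv hxy with rfl | ⟨h1, h2⟩
      · exact Or.inr ⟨0, le_rfl, hQp⟩
      · have hyx : pR H par y x := ⟨h1, hv, h2⟩
        refine goal y (Relation.TransGen.single hyx) ?_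
        intro h
        by_contra hne
        rcases Relation.reflTransGen_iff_eq_or_transGen.mp h with h | h
        · exact hne h.symm
        · have h3 := tg_par h
          rw [h2] at h3
          exact irr x (Relation.TransGen.tail' h3 (hch_spec ⟨y, hyx⟩))
    · obtain ⟨h1, h2⟩ := mem_lossS.mp hx
      rcases hP.nbp x y (tg_mem h1).1 hxy with rfl | ⟨h3, h4⟩
      · rcases Relation.reflTransGen_iff_eq_or_transGen.mp (tg_par h1) with h | h
        · left; rw [← h]; exact ⟨Finset.mem_insert_self _ _, Nat.zero_le _⟩
        · exact goal _ h (fun h' => absurd (Relation.ReflTransGen.head (tg_step h1) h') h2)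
      · have hyx : pR H par y x := ⟨h3, (tg_mem h1).1, h4⟩
        refine goal y (Relation.TransGen.head hyx h1) ?_
        intro h
        rcases Relation.reflTransGen_iff_eq_or_transGen.mp h with h | h
        · exact h.symm
        · have h5 := tg_par h
          rw [h4] at h5
          exact absurd h5 h2

open Classical in
lemma loss_sum (hP : Peel G H par top rk) :
    4 * ∑ v ∈ Hᶜ, (lossS H par v).card + Hᶜ.card ≤ Hᶜ.card * Hᶜ.card := by
  have irr : ∀ a, ¬ Relation.TransGen (pR H par) a a := fun a h => (tg_rk hP h).ne rfl
  set h := hch H par with hh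
  let Ls : Finset (V × V) := {q ∈ Hᶜ ×ˢ Hᶜ | q.2 ∈ lossS H par q.1}
  have hLs : ∑ v ∈ Hᶜ, (lossS H par v).card = Ls.card := by
    rw [Finset.card_eq_sum_card_fiberwise (f := Prod.fst) (t := Hᶜ) (s := Ls)
      (fun q hq => (Finset.mem_product.mp (Finset.mem_filter.mp hq).1).1)]
    refine Finset.sum_congr rfl fun v hv => ?_
    refine Finset.card_bij (fun w _ => (v, w)) ?_ ?_ ?_
    · intro w hw
      have := (tg_mem (mem_lossS.mp hw).1)
      simp only [Ls, Finset.mem_filter, Finset.mem_product, Finset.mem_compl]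
      exact ⟨⟨⟨this.2, this.1⟩, hw⟩, trivial⟩
    · intro a _ b _ hab; exact (Prod.mk.inj hab).2
    · rintro ⟨a, b⟩ hq
      simp only [Ls, Finset.mem_filter] at hq
      obtain ⟨⟨_, h1⟩, rfl⟩ := hq
      exact ⟨b, h1, rfl⟩
  have fact : ∀ q ∈ Ls, Relation.TransGen (pR H par) q.2 q.1 ∧ ¬ Relation.ReflTransGen (pR H par) q.2 (h q.1) ∧
      pR H par (h q.1) q.1 ∧ ¬ Relation.ReflTransGen (pR H par) (h q.1) q.2 := by
    intro q hq
    obtain ⟨h1, h2⟩ := mem_lossS.mp (Finset.mem_filter.mp hq).2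
    have h3 := hch_spec (tg_child h1)
    refine ⟨h1, h2, h3, ?_⟩
    intro h4
    rcases Relation.reflTransGen_iff_eq_or_transGen.mp h4 with h5 | h5
    · exact h2 (h5 ▸ Relation.ReflTransGen.refl)
    · have h6 := tg_par h5
      rw [h3.2.2] at h6
      exact irr q.1 (Relation.TransGen.trans_right h6 h1)
  rw [hLs]
  let A1 := Ls
  let A2 := Ls.image (fun q => (q.2, q.1))
  let A3 := Ls.image (fun q => (q.2, h q.1))
  let A4 := Ls.image (fun q => (h q.1, q.2))
  have c2 : A2.card = Ls.card := Finset.card_image_of_injective _ (by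
    rintro ⟨a, b⟩ ⟨c, d⟩ h; simp only [Prod.mk.injEq] at h ⊢; exact ⟨h.2, h.1⟩)
  have hinj : ∀ q ∈ Ls, ∀ q' ∈ Ls, h q.1 = h q'.1 → q.1 = q'.1 := by
    intro q hq q' hq' e
    have h1 := (fact q hq).2.2.1.2.2
    have h2 := (fact q' hq').2.2.1.2.2
    rw [← h1, ← h2, e]
  have c3 : A3.card = Ls.card := Finset.card_image_of_injOn (by
    intro q hq q' hq' e
    simp only [Prod.mk.injEq] at e
    exact Prod.ext (hinj q hq q' hq' e.2) e.1)
  have c4 : A4.card = Ls.card := Finset.card_image_of_injOn (by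
    intro q hq q' hq' e
    simp only [Prod.mk.injEq] at e
    exact Prod.ext (hinj q hq q' hq' e.1) e.2)
  have d12 : Disjoint A1 A2 := by
    rw [Finset.disjoint_left]
    intro q hq hq'
    obtain ⟨q', h1, rfl⟩ := Finset.mem_image.mp hq'
    exact irr _ ((fact _ hq).1.trans (fact _ h1).1)
  have d34 : Disjoint A3 A4 := by
    rw [Finset.disjoint_left]
    intro q hq hq'
    obtain ⟨a, h1, rfl⟩ := Finset.mem_image.mp hq
    obtain ⟨b, h2, e⟩ := Finset.mem_image.mp hq'
    simp only [Prod.mk.injEq] at e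
    have f1 := fact a h1
    have f2 := fact b h2
    have g1 := tg_par f1.1
    rw [← e.1, f2.2.2.1.2.2] at g1
    have g2 := tg_par f2.1
    rw [e.2, f1.2.2.1.2.2] at g2
    have : a.1 = b.1 := by
      rcases Relation.reflTransGen_iff_eq_or_transGen.mp g1 with h | h
      · exact h
      · exact absurd (Relation.TransGen.trans_left h g2) (irr _)
    apply f1.2.1
    rw [← e.1, this]
  have d1234 : Disjoint (A1 ∪ A2) (A3 ∪ A4) := by
    rw [Finset.disjoint_left]
    rintro ⟨x, y⟩ hq hq'
    have hcomp : Relation.ReflTransGen (pR H par) x y ∨ Relation.ReflTransGen (pR H par) y x := by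
      rcases Finset.mem_union.mp hq with h | h
      · exact Or.inr (fact _ h).1.to_reflTransGen
      · obtain ⟨a, h1, e⟩ := Finset.mem_image.mp h
        simp only [Prod.mk.injEq] at e
        rw [← e.1, ← e.2]
        exact Or.inl (fact _ h1).1.to_reflTransGen
    have hinc : ¬ Relation.ReflTransGen (pR H par) x y ∧ ¬ Relation.ReflTransGen (pR H par) y x := by
      rcases Finset.mem_union.mp hq' with h | h
      · obtain ⟨a, h1, e⟩ := Finset.mem_image.mp h
        simp only [Prod.mk.injEq] at e
        rw [← e.1, ← e.2]
        exact ⟨(fact _ h1).2.1, (fact _ h1).2.2.2⟩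
      · obtain ⟨a, h1, e⟩ := Finset.mem_image.mp h
        simp only [Prod.mk.injEq] at e
        rw [← e.1, ← e.2]
        exact ⟨(fact _ h1).2.2.2, (fact _ h1).2.1⟩
    tauto
  have sub : (A1 ∪ A2) ∪ (A3 ∪ A4) ⊆ Hᶜ.offDiag := by
    rintro ⟨x, y⟩ hq
    rw [Finset.mem_offDiag, Finset.mem_compl, Finset.mem_compl]
    show x ∉ H ∧ y ∉ H ∧ x ≠ y
    rcases Finset.mem_union.mp hq with hq | hq
    · rcases Finset.mem_union.mp hq with h | h
      · have := (fact _ h).1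
        refine ⟨(tg_mem this).2, (tg_mem this).1, ?_⟩
        intro e
        dsimp only at this
        rw [e] at this; exact irr _ this
      · obtain ⟨a, h1, e⟩ := Finset.mem_image.mp h
        simp only [Prod.mk.injEq] at e
        have := (fact _ h1).1
        rw [e.1, e.2] at this
        refine ⟨(tg_mem this).1, (tg_mem this).2, ?_⟩
        rintro rfl; exact irr _ this
    · rcases Finset.mem_union.mp hq with h | h
      · obtain ⟨a, h1, e⟩ := Finset.mem_image.mp h
        simp only [Prod.mk.injEq] at e
        have := fact _ h1
        rw [e.1, e.2] at this
        refine ⟨(tg_mem this.1).1, this.2.2.1.1, ?_⟩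
        rintro rfl; exact this.2.1 Relation.ReflTransGen.refl
      · obtain ⟨a, h1, e⟩ := Finset.mem_image.mp h
        simp only [Prod.mk.injEq] at e
        have := fact _ h1
        rw [e.1, e.2] at this
        refine ⟨this.2.2.1.1, (tg_mem this.1).1, ?_⟩
        rintro rfl; exact this.2.1 Relation.ReflTransGen.refl
  have hcard := Finset.card_le_card sub
  rw [Finset.card_union_of_disjoint d1234, Finset.card_union_of_disjoint d12, Finset.card_union_of_disjoint d34,
    c2, c3, c4, Finset.offDiag_card] at hcard
  have : Hᶜ.card ≤ Hᶜ.card * Hᶜ.card := Nat.le_mul_self _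
  have e1 : A1.card = Ls.card := rfl
  omega

end

section
set_option linter.unusedSectionVars false
variable {V : Type} [Fintype V] {G : SimpleGraph V} {H : Finset V} {par top : V → V} {rk : V → ℕ}

/-- nearly everything is saved -/
def Good (G : SimpleGraph V) (H : Finset V) [DecidableEq V] (v : V) : Prop :=
  Fintype.card V ≤ sn G (fun _ => 2) v + 5 + Hᶜ.card

open Classical in
lemma chain_good (hP : Peel G H par top rk) (k : ℕ) (hk : k ≤ 4) (c : ℕ → V) (hcH : ∀ i ≤ k, c i ∈ H)
    (hinj : ∀ i j, i < j → j ≤ k → c i ≠ c j) (hind : ∀ i j, i < j → j ≤ k → G.Adj (c i) (c j) → j = i + 1)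
    (hcnt : ∀ t ≤ k, ∃ E : Finset V, E ⊆ nb G H (c t) ∧ (nb G H (c t)).card ≤ E.card + 2 ∧
      ∀ e ∈ E, (∃ i ≤ k, e = c i) ∨ ∃ j < t, G.Adj (c j) e) : Good G H (c 0) := by
  let C : Finset V := (range (k + 1)).image c
  have hC : ∀ x, x ∈ C ↔ ∃ i ≤ k, c i = x := by
    intro x; simp [C]
  let τ : V → ℕ := fun x => sInf {i | c i = x}
  have hτ : ∀ i ≤ k, τ (c i) = i := by
    intro i hi
    have h1 : τ (c i) ≤ i := Nat.sInf_le (show c i = c i from rfl)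
    have h2 : c (τ (c i)) = c i := Nat.sInf_mem (s := {j | c j = c i}) ⟨i, rfl⟩
    by_contra hne
    exact hinj _ i (by omega) hi h2
  let P : ℕ → Finset V := fun t => if t ≤ k then {y ∈ nb G H (c t) | y ∉ C ∧ ∀ j < t, ¬ G.Adj (c j) y} else ∅
  have hm := sn_core hP (c 0) C (fun x hx => by obtain ⟨i, hi, rfl⟩ := (hC x).mp hx; exact hcH i hi) τ P
    ?_ ?_ ((hC _).mpr ⟨0, Nat.zero_le _, rfl⟩) (hτ 0 (Nat.zero_le _)) ?_
  · have h1 : C.card ≤ k + 1 := (Finset.card_image_le).trans (by simp)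
    have h2 : ∑ x ∈ C, (pend H top x).card ≤ ∑ x ∈ H, (pend H top x).card :=
      Finset.sum_le_sum_of_subset (fun x hx => by obtain ⟨i, hi, rfl⟩ := (hC x).mp hx; exact hcH i hi)
    rw [pend_sum hP] at h2
    unfold Good
    omega
  · intro t
    simp only [P]
    split_ifs with ht
    · obtain ⟨E, h1, h2, h3⟩ := hcnt t ht
      have h4 : ({y ∈ nb G H (c t) | y ∉ C ∧ ∀ j < t, ¬ G.Adj (c j) y} : Finset V) ⊆ nb G H (c t) \ E := by
        intro y hy
        rw [Finset.mem_filter] at hy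
        refine Finset.mem_sdiff.mpr ⟨hy.1, fun hyE => ?_⟩
        rcases h3 y hyE with ⟨i, hi, h⟩ | ⟨j, hj, h⟩
        · exact hy.2.1 ((hC y).mpr ⟨i, hi, h.symm⟩)
        · exact hy.2.2 j hj h
      have h5 := Finset.card_le_card h4
      rw [Finset.card_sdiff_of_subset h1] at h5
      omega
    · simp
  · intro t x hx
    simp only [P] at hx
    split_ifs at hx with ht
    · rw [Finset.mem_filter] at hx
      exact ⟨(mem_nb.mp hx.1).1, hx.2.1⟩
    · simp at hx
  · intro x hx y hy hxy
    obtain ⟨i, hi, rfl⟩ := (hC x).mp hx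
    by_cases hyC : y ∈ C
    · left
      refine ⟨hyC, ?_⟩
      obtain ⟨j, hj, rfl⟩ := (hC y).mp hyC
      rw [hτ i hi, hτ j hj]
      by_contra hlt
      have := hind i j (by omega) hj hxy
      omega
    · right
      have hex : ∃ s, G.Adj (c s) y := ⟨i, hxy⟩
      have hle : Nat.find hex ≤ i := Nat.find_min' hex hxy
      refine ⟨Nat.find hex, by rw [hτ i hi]; exact hle, ?_⟩
      simp only [P, if_pos (hle.trans hi), Finset.mem_filter]
      exact ⟨mem_nb.mpr ⟨hy, Nat.find_spec hex⟩, hyC, fun j hj => Nat.find_min hex hj⟩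

/-- explicit chains -/
def chn (a b c d e : V) : ℕ → V
  | 0 => a
  | 1 => b
  | 2 => c
  | 3 => d
  | _ => e

open Classical in
lemma exE1 {a x : V} {K : V → Prop} (hx : x ∈ nb G H a) (hd : (nb G H a).card ≤ 3) (hK : K x) :
    ∃ E : Finset V, E ⊆ nb G H a ∧ (nb G H a).card ≤ E.card + 2 ∧ ∀ e ∈ E, K e :=
  ⟨{x}, by simpa using hx, by simpa using hd, by simpa using hK⟩

open Classical in
lemma exE2 {a x y : V} {K : V → Prop} (hx : x ∈ nb G H a) (hy : y ∈ nb G H a) (hxy : x ≠ y)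
    (hd : (nb G H a).card ≤ 4) (hKx : K x) (hKy : K y) :
    ∃ E : Finset V, E ⊆ nb G H a ∧ (nb G H a).card ≤ E.card + 2 ∧ ∀ e ∈ E, K e := by
  refine ⟨{x, y}, ?_, ?_, ?_⟩
  · intro z hz
    rcases Finset.mem_insert.mp hz with rfl | hz
    · exact hx
    · rw [Finset.mem_singleton] at hz; rw [hz]; exact hy
  · rw [Finset.card_pair hxy]; exact hd
  · intro z hz
    rcases Finset.mem_insert.mp hz with rfl | hz
    · exact hKx
    · rw [Finset.mem_singleton] at hz; rw [hz]; exact hKy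

lemma nb_symm {a b : V} (ha : a ∈ H) (h : b ∈ nb G H a) : a ∈ nb G H b :=
  mem_nb.mpr ⟨ha, (mem_nb.mp h).2.symm⟩

open Classical in
lemma good_K1 (hP : Peel G H par top rk) {v u : V} (hv : v ∈ H) (dv : (nb G H v).card ≤ 3)
    (hu : u ∈ nb G H v) (du : (nb G H u).card ≤ 3) : Good G H v := by
  refine chain_good hP 1 (by omega) (chn v u u u u) ?_ ?_ ?_ ?_
  · intro i hi; interval_cases i
    · exact hv
    · exact (mem_nb.mp hu).1
  · intro i j hij hj; obtain rfl : j = 1 := by omega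
    obtain rfl : i = 0 := by omega
    exact (mem_nb.mp hu).2.ne
  · intro i j hij hj _; omega
  · intro t ht; interval_cases t
    · exact exE1 hu dv (Or.inl ⟨1, by omega, rfl⟩)
    · exact exE1 (nb_symm hv hu) du (Or.inl ⟨0, by omega, rfl⟩)

open Classical in
lemma good_tri (hP : Peel G H par top rk) {v u u' : V} (hv : v ∈ H) (dv : (nb G H v).card ≤ 3)
    (hu : u ∈ nb G H v) (hu' : u' ∈ nb G H v) (huu : u' ∈ nb G H u) (du : (nb G H u).card ≤ 4) : Good G H v := by
  refine chain_good hP 1 (by omega) (chn v u u u u) ?_ ?_ ?_ ?_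
  · intro i hi; interval_cases i
    · exact hv
    · exact (mem_nb.mp hu).1
  · intro i j hij hj; obtain rfl : j = 1 := by omega
    obtain rfl : i = 0 := by omega
    exact (mem_nb.mp hu).2.ne
  · intro i j hij hj _; omega
  · intro t ht; interval_cases t
    · exact exE1 hu dv (Or.inl ⟨1, by omega, rfl⟩)
    · exact exE2 (nb_symm hv hu) huu (mem_nb.mp hu').2.ne du (Or.inl ⟨0, by omega, rfl⟩)
        (Or.inr ⟨0, by omega, (mem_nb.mp hu').2⟩)

open Classical in
lemma good_K2 (hP : Peel G H par top rk) {v u w : V} (hv : v ∈ H) (dv : (nb G H v).card ≤ 3)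
    (hu : u ∈ nb G H v) (du : (nb G H u).card ≤ 4) (hw : w ∈ nb G H u) (hwv : w ≠ v)
    (dw : (nb G H w).card ≤ 3) : Good G H v := by
  have uH := (mem_nb.mp hu).1
  have wH := (mem_nb.mp hw).1
  by_cases hvw : G.Adj v w
  · exact good_K1 hP hv dv (mem_nb.mpr ⟨wH, hvw⟩) dw
  refine chain_good hP 2 (by omega) (chn v u w w w) ?_ ?_ ?_ ?_
  · intro i hi; interval_cases i
    · exact hv
    · exact uH
    · exact wH
  · intro i j hij hj; interval_cases j <;> interval_cases i
    · exact (mem_nb.mp hu).2.ne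
    · exact hwv.symm
    · exact (mem_nb.mp hw).2.ne
  · intro i j hij hj h; interval_cases j <;> interval_cases i <;> first | rfl | exact absurd h hvw
  · intro t ht; interval_cases t
    · exact exE1 hu dv (Or.inl ⟨1, by omega, rfl⟩)
    · exact exE2 (nb_symm hv hu) hw hwv.symm du (Or.inl ⟨0, by omega, rfl⟩) (Or.inl ⟨2, by omega, rfl⟩)
    · exact exE1 (nb_symm uH hw) dw (Or.inl ⟨1, by omega, rfl⟩)

open Classical in
lemma good_cyc (hP : Peel G H par top rk) {v u w u' : V} (hv : v ∈ H) (dv : (nb G H v).card ≤ 3)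
    (hu : u ∈ nb G H v) (du : (nb G H u).card ≤ 4) (hw : w ∈ nb G H u) (hwv : w ≠ v)
    (dw : (nb G H w).card ≤ 4) (hu' : u' ∈ nb G H v) (hwu : u' ∈ nb G H w) (huu : u ≠ u') : Good G H v := by
  have uH := (mem_nb.mp hu).1
  have wH := (mem_nb.mp hw).1
  by_cases hvw : G.Adj v w
  · exact good_tri hP hv dv hu (mem_nb.mpr ⟨wH, hvw⟩) hw du
  refine chain_good hP 2 (by omega) (chn v u w w w) ?_ ?_ ?_ ?_
  · intro i hi; interval_cases i
    · exact hv
    · exact uH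
    · exact wH
  · intro i j hij hj; interval_cases j <;> interval_cases i
    · exact (mem_nb.mp hu).2.ne
    · exact hwv.symm
    · exact (mem_nb.mp hw).2.ne
  · intro i j hij hj h; interval_cases j <;> interval_cases i <;> first | rfl | exact absurd h hvw
  · intro t ht; interval_cases t
    · exact exE1 hu dv (Or.inl ⟨1, by omega, rfl⟩)
    · exact exE2 (nb_symm hv hu) hw hwv.symm du (Or.inl ⟨0, by omega, rfl⟩) (Or.inl ⟨2, by omega, rfl⟩)
    · exact exE2 (nb_symm uH hw) hwu huu dw (Or.inl ⟨1, by omega, rfl⟩) (Or.inr ⟨0, by omega, (mem_nb.mp hu').2⟩)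

open Classical in
lemma good_K3 (hP : Peel G H par top rk) {v u w x : V} (hv : v ∈ H) (dv : (nb G H v).card ≤ 3)
    (hu : u ∈ nb G H v) (du : (nb G H u).card = 4) (hw : w ∈ nb G H u)
    (dw : (nb G H w).card = 4) (hx : x ∈ nb G H w) (dx : (nb G H x).card ≤ 3) (hxv : x ≠ v) : Good G H v := by
  have uH := (mem_nb.mp hu).1
  have wH := (mem_nb.mp hw).1
  have xH := (mem_nb.mp hx).1
  have hwv : w ≠ v := by rintro rfl; omega
  have hux : u ≠ x := by rintro rfl; omega
  by_cases hvw : G.Adj v w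
  · exact good_tri hP hv dv hu (mem_nb.mpr ⟨wH, hvw⟩) hw du.le
  by_cases hvx : G.Adj v x
  · exact good_K1 hP hv dv (mem_nb.mpr ⟨xH, hvx⟩) dx
  by_cases hux' : G.Adj u x
  · exact good_K2 hP hv dv hu du.le (mem_nb.mpr ⟨xH, hux'⟩) hxv dx
  refine chain_good hP 3 (by omega) (chn v u w x x) ?_ ?_ ?_ ?_
  · intro i hi; interval_cases i
    · exact hv
    · exact uH
    · exact wH
    · exact xH
  · intro i j hij hj; interval_cases j <;> interval_cases i
    · exact (mem_nb.mp hu).2.ne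
    · exact hwv.symm
    · exact (mem_nb.mp hw).2.ne
    · exact hxv.symm
    · exact hux
    · exact (mem_nb.mp hx).2.ne
  · intro i j hij hj h
    interval_cases j <;> interval_cases i <;>
      first | rfl | exact absurd h hvw | exact absurd h hvx | exact absurd h hux'
  · intro t ht; interval_cases t
    · exact exE1 hu dv (Or.inl ⟨1, by omega, rfl⟩)
    · exact exE2 (nb_symm hv hu) hw hwv.symm du.le (Or.inl ⟨0, by omega, rfl⟩) (Or.inl ⟨2, by omega, rfl⟩)
    · exact exE2 (nb_symm uH hw) hx hux dw.le (Or.inl ⟨1, by omega, rfl⟩) (Or.inl ⟨3, by omega, rfl⟩)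
    · exact exE1 (nb_symm wH hx) dx (Or.inl ⟨2, by omega, rfl⟩)

open Classical in
lemma good_K4 (hP : Peel G H par top rk) {v u w u' x : V} (hv : v ∈ H) (dv : (nb G H v).card ≤ 3)
    (hu : u ∈ nb G H v) (du : (nb G H u).card = 4) (hw : w ∈ nb G H u)
    (dw : (nb G H w).card = 4) (hu' : u' ∈ nb G H w) (du' : (nb G H u').card = 4) (huu : u ≠ u')
    (hx : x ∈ nb G H u') (dx : (nb G H x).card ≤ 3) (hxv : x ≠ v) : Good G H v := by
  have uH := (mem_nb.mp hu).1
  have wH := (mem_nb.mp hw).1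
  have uH' := (mem_nb.mp hu').1
  have xH := (mem_nb.mp hx).1
  have hwv : w ≠ v := by rintro rfl; omega
  have huv' : u' ≠ v := by rintro rfl; omega
  have hux : u ≠ x := by rintro rfl; omega
  have hwx : w ≠ x := by rintro rfl; omega
  by_cases hvw : G.Adj v w
  · exact good_tri hP hv dv hu (mem_nb.mpr ⟨wH, hvw⟩) hw du.le
  by_cases hvu : G.Adj v u'
  · exact good_cyc hP hv dv hu du.le hw hwv dw.le (mem_nb.mpr ⟨uH', hvu⟩) hu' huu
  by_cases hvx : G.Adj v x
  · exact good_K1 hP hv dv (mem_nb.mpr ⟨xH, hvx⟩) dx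
  by_cases huu' : G.Adj u u'
  · exact good_K3 hP hv dv hu du (mem_nb.mpr ⟨uH', huu'⟩) du' hx dx hxv
  by_cases hux' : G.Adj u x
  · exact good_K2 hP hv dv hu du.le (mem_nb.mpr ⟨xH, hux'⟩) hxv dx
  by_cases hwx' : G.Adj w x
  · exact good_K3 hP hv dv hu du hw dw (mem_nb.mpr ⟨xH, hwx'⟩) dx hxv
  refine chain_good hP 4 (by omega) (chn v u w u' x) ?_ ?_ ?_ ?_
  · intro i hi; interval_cases i
    · exact hv
    · exact uH
    · exact wH
    · exact uH'
    · exact xH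
  · intro i j hij hj; interval_cases j <;> interval_cases i
    · exact (mem_nb.mp hu).2.ne
    · exact hwv.symm
    · exact (mem_nb.mp hw).2.ne
    · exact huv'.symm
    · exact huu
    · exact (mem_nb.mp hu').2.ne
    · exact hxv.symm
    · exact hux
    · exact hwx
    · exact (mem_nb.mp hx).2.ne
  · intro i j hij hj h
    interval_cases j <;> interval_cases i <;>
      first | rfl | exact absurd h hvw | exact absurd h hvx | exact absurd h hux' | exact absurd h hvu | exact absurd h huu' | exact absurd h hwx'
  · intro t ht; interval_cases t
    · exact exE1 hu dv (Or.inl ⟨1, by omega, rfl⟩)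
    · exact exE2 (nb_symm hv hu) hw hwv.symm du.le (Or.inl ⟨0, by omega, rfl⟩) (Or.inl ⟨2, by omega, rfl⟩)
    · exact exE2 (nb_symm uH hw) hu' huu dw.le (Or.inl ⟨1, by omega, rfl⟩) (Or.inl ⟨3, by omega, rfl⟩)
    · exact exE2 (nb_symm wH hu') hx hwx du'.le (Or.inl ⟨2, by omega, rfl⟩) (Or.inl ⟨4, by omega, rfl⟩)
    · exact exE1 (nb_symm uH' hx) dx (Or.inl ⟨3, by omega, rfl⟩)

end

section
set_option linter.unusedSectionVars false
variable {V : Type} [Fintype V] {G : SimpleGraph V} {H : Finset V} {par top : V → V} {rk : V → ℕ}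

open Classical in
/-- second-layer token -/
noncomputable def tk2 (G : SimpleGraph V) (H : Finset V) (u w : V) : V ⊕ (V × V × Fin 4) :=
  if 5 ≤ (nb G H w).card then Sum.inr (w, u, 0) else Sum.inl w

open Classical in
/-- tokens of a dart -/
noncomputable def tk (G : SimpleGraph V) (H : Finset V) (q : V × V) : Finset (V ⊕ (V × V × Fin 4)) :=
  if 5 ≤ (nb G H q.2).card then (univ : Finset (Fin 4)).image (fun i => Sum.inr (q.2, q.1, i))
  else insert (Sum.inl q.2) (((nb G H q.2).erase q.1).image (tk2 G H q.2))

lemma tk2_inj (u : V) : Function.Injective (tk2 G H u) := by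
  intro a b h
  unfold tk2 at h
  split_ifs at h
  · simp only [Sum.inr.injEq, Prod.mk.injEq] at h; exact h.1
  · exact Sum.inl.inj h

open Classical in
lemma tk_card (q : V × V) (hq1 : q.1 ∈ nb G H q.2) (hq : 4 ≤ (nb G H q.2).card) : 4 ≤ (tk G H q).card := by
  unfold tk
  split_ifs with h
  · rw [Finset.card_image_of_injective]
    · simp
    · intro a b hab
      simpa using hab
  · rw [Finset.card_insert_of_notMem, Finset.card_image_of_injective _ (tk2_inj _),
      Finset.card_erase_of_mem hq1]
    · omega
    · intro hm
      obtain ⟨w, hw, e⟩ := Finset.mem_image.mp hm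
      unfold tk2 at e
      split_ifs at e
      have e' := Sum.inl.inj e
      have := (mem_nb.mp (Finset.mem_of_mem_erase hw)).2
      rw [e'] at this
      exact this.ne rfl

open Classical in
lemma mem_tk_inl {q : V × V} {x : V} (h : Sum.inl x ∈ tk G H q) : (nb G H q.2).card ≤ 4 ∧
    (x = q.2 ∨ (x ∈ nb G H q.2 ∧ x ≠ q.1 ∧ (nb G H x).card ≤ 4)) := by
  unfold tk at h
  split_ifs at h with h5
  · simp at h
  · refine ⟨by omega, ?_⟩
    rcases Finset.mem_insert.mp h with h | h
    · exact Or.inl (Sum.inl.inj h)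
    · obtain ⟨w, hw, e⟩ := Finset.mem_image.mp h
      unfold tk2 at e
      split_ifs at e with h6
      have e' := Sum.inl.inj e
      subst e'
      rw [Finset.mem_erase] at hw
      exact Or.inr ⟨hw.2, hw.1, by omega⟩

open Classical in
lemma mem_tk_inr {q : V × V} {a b : V} {i : Fin 4} (h : Sum.inr (a, b, i) ∈ tk G H q) :
    (5 ≤ (nb G H q.2).card ∧ a = q.2 ∧ b = q.1) ∨
    ((nb G H q.2).card ≤ 4 ∧ b = q.2 ∧ 5 ≤ (nb G H a).card ∧ a ∈ nb G H q.2) := by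
  unfold tk at h
  split_ifs at h with h5
  · obtain ⟨j, _, e⟩ := Finset.mem_image.mp h
    simp only [Sum.inr.injEq, Prod.mk.injEq] at e
    exact Or.inl ⟨h5, e.1.symm, e.2.1.symm⟩
  · right
    rcases Finset.mem_insert.mp h with h | h
    · simp at h
    · obtain ⟨w, hw, e⟩ := Finset.mem_image.mp h
      unfold tk2 at e
      split_ifs at e with h6
      simp only [Sum.inr.injEq, Prod.mk.injEq] at e
      obtain ⟨rfl, rfl, _⟩ := e
      exact ⟨by omega, rfl, h6, Finset.mem_of_mem_erase hw⟩

open Classical in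
lemma discharge (hP : Peel G H par top rk) :
    12 * #{v ∈ H | (nb G H v).card = 3 ∧ ¬ Good G H v} ≤
      #{v ∈ H | (nb G H v).card = 4} + 4 * ∑ x ∈ H with 5 ≤ (nb G H x).card, (nb G H x).card := by
  set Bd : Finset V := {v ∈ H | (nb G H v).card = 3 ∧ ¬ Good G H v} with hBd
  let X : Finset (V × V) := Bd.sigma (fun v => nb G H v) |>.map ⟨fun s => (s.1, s.2), by
    rintro ⟨a, b⟩ ⟨c, d⟩ h; simp only [Prod.mk.injEq] at h; obtain ⟨rfl, rfl⟩ := h; rfl⟩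
  have hX : ∀ q, q ∈ X ↔ q.1 ∈ Bd ∧ q.2 ∈ nb G H q.1 := by
    rintro ⟨a, b⟩
    simp only [X, Finset.mem_map, Finset.mem_sigma]
    constructor
    · rintro ⟨⟨c, d⟩, h, e⟩
      have e' : (c, d) = (a, b) := e
      simp only [Prod.mk.injEq] at e'
      obtain ⟨rfl, rfl⟩ := e'
      exact h
    · intro h
      exact ⟨⟨a, b⟩, h, rfl⟩
  have hXc : X.card = 3 * Bd.card := by
    simp only [X, Finset.card_map, Finset.card_sigma]
    rw [Finset.sum_const_nat (m := 3), mul_comm]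
    intro v hv
    exact (Finset.mem_filter.mp hv).2.1
  -- facts on bad vertices
  have bad : ∀ q ∈ X, q.1 ∈ H ∧ (nb G H q.1).card = 3 ∧ ¬ Good G H q.1 ∧ q.2 ∈ nb G H q.1 ∧ q.1 ∈ nb G H q.2 ∧
      4 ≤ (nb G H q.2).card := by
    intro q hq
    have h := (hX q).mp hq
    have h1 := Finset.mem_filter.mp h.1
    refine ⟨h1.1, h1.2.1, h1.2.2, h.2, nb_symm h1.1 h.2, ?_⟩
    by_contra hlt
    exact h1.2.2 (good_K1 hP h1.1 h1.2.1.le h.2 (by omega))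
  have disj : ∀ q ∈ X, ∀ q' ∈ X, q ≠ q' → Disjoint (tk G H q) (tk G H q') := by
    intro q hq q' hq' hne
    obtain ⟨v, u⟩ := q
    obtain ⟨v', u'⟩ := q'
    obtain ⟨vH, dv, ng, huv, hvu, du⟩ := bad _ hq
    obtain ⟨vH', dv', ng', huv', hvu', du'⟩ := bad _ hq'
    dsimp only at *
    -- two bad neighbours of a degree 4 vertex
    have same : (nb G H u).card ≤ 4 → u = u' → False := by
      intro h4 e
      subst e
      have hvv : v' ≠ v := by rintro rfl; exact hne rfl
      exact ng (good_K2 hP vH dv.le huv h4 hvu' hvv dv'.le)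
    rw [Finset.disjoint_left]
    rintro (x | ⟨a, b, i⟩) h h'
    · obtain ⟨h1, h2⟩ := mem_tk_inl h
      obtain ⟨h1', h2'⟩ := mem_tk_inl h'
      dsimp only at *
      rcases h2 with rfl | ⟨h3, h4, h5⟩
      · rcases h2' with rfl | ⟨h3', h4', h5'⟩
        · exact same h1 rfl
        · by_cases hvv : v = v'
          · subst hvv
            exact ng (good_tri hP vH dv.le huv' huv h3' h1')
          · exact ng' (good_K3 hP vH' dv'.le huv' (by omega) h3' (by omega) hvu dv.le hvv)
      · have h6 : 4 ≤ (nb G H x).card := by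
          by_contra hlt
          exact ng (good_K2 hP vH dv.le huv h1 h3 h4 (by omega))
        rcases h2' with rfl | ⟨h3', h4', h5'⟩
        · by_cases hvv : v = v'
          · subst hvv
            exact ng (good_tri hP vH dv.le huv huv' h3 h1)
          · exact ng (good_K3 hP vH dv.le huv (by omega) h3 (by omega) hvu' dv'.le (Ne.symm hvv))
        · by_cases huu : u = u'
          · exact same h1 huu
          have hxu' : u' ∈ nb G H x := nb_symm (mem_nb.mp huv').1 h3'
          by_cases hvv : v = v'
          · subst hvv
            exact ng (good_cyc hP vH dv.le huv h1 h3 h4 h5 huv' hxu' huu)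
          · exact ng (good_K4 hP vH dv.le huv (by omega) h3 (by omega) hxu' (by omega) huu hvu' dv'.le
              (Ne.symm hvv))
    · rcases mem_tk_inr h with ⟨h1, rfl, rfl⟩ | ⟨h1, rfl, h3, h4⟩ <;>
      rcases mem_tk_inr h' with ⟨h1', e, e'⟩ | ⟨h1', e', h3', h4'⟩ <;> dsimp only at *
      · exact hne (by rw [e, e'])
      · rw [← e'] at du'; omega
      · rw [e'] at du; omega
      · exact same h1 e'
  let T : Finset (V ⊕ (V × V × Fin 4)) :=
    ({v ∈ H | (nb G H v).card = 4}).disjSum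
      (((({x ∈ H | 5 ≤ (nb G H x).card}).sigma (fun x => nb G H x)) ×ˢ (univ : Finset (Fin 4))).map
        ⟨fun s => (s.1.1, s.1.2, s.2), by
          rintro ⟨⟨a, b⟩, i⟩ ⟨⟨c, d⟩, j⟩ h
          simp only [Prod.mk.injEq] at h
          obtain ⟨rfl, rfl, rfl⟩ := h; rfl⟩)
  have hT : T.card = #{v ∈ H | (nb G H v).card = 4} + 4 * ∑ x ∈ H with 5 ≤ (nb G H x).card, (nb G H x).card := by
    simp only [T, Finset.card_disjSum, Finset.card_map, Finset.card_product, Finset.card_sigma, Finset.card_univ,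
      Fintype.card_fin]
    ring
  have hsub : X.biUnion (tk G H) ⊆ T := by
    intro z hz
    obtain ⟨⟨v, u⟩, hq, hz⟩ := Finset.mem_biUnion.mp hz
    obtain ⟨vH, dv, ng, huv, hvu, du⟩ := bad _ hq
    dsimp only at *
    rcases z with x | ⟨a, b, i⟩
    · obtain ⟨h1, h2⟩ := mem_tk_inl hz
      dsimp only at *
      refine Finset.inl_mem_disjSum.mpr (Finset.mem_filter.mpr ?_)
      rcases h2 with rfl | ⟨h3, h4, h5⟩
      · exact ⟨(mem_nb.mp huv).1, by omega⟩
      · refine ⟨(mem_nb.mp h3).1, ?_⟩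
        by_contra hlt
        exact ng (good_K2 hP vH dv.le huv h1 h3 h4 (by omega))
    · refine Finset.inr_mem_disjSum.mpr (Finset.mem_map.mpr ⟨(⟨a, b⟩, i), ?_, rfl⟩)
      rw [Finset.mem_product, Finset.mem_sigma, Finset.mem_filter]
      refine ⟨?_, Finset.mem_univ _⟩
      rcases mem_tk_inr hz with ⟨h1, rfl, rfl⟩ | ⟨h1, rfl, h3, h4⟩ <;> dsimp only at *
      · exact ⟨⟨(mem_nb.mp huv).1, h1⟩, hvu⟩
      · exact ⟨⟨(mem_nb.mp h4).1, h3⟩, nb_symm (mem_nb.mp huv).1 h4⟩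
  have h1 := Finset.card_le_card hsub
  rw [Finset.card_biUnion disj, hT] at h1
  have h2 : X.card * 4 ≤ ∑ q ∈ X, (tk G H q).card := by
    rw [← smul_eq_mul]
    refine Finset.card_nsmul_le_sum _ _ _ ?_
    intro q hq
    exact tk_card q (bad q hq).2.2.2.2.1 (bad q hq).2.2.2.2.2
  omega

end

open Classical in
lemma sn_two {V : Type} [Fintype V] (G : SimpleGraph V) (v : V) (hn : 3 ≤ Fintype.card V) :
    2 ≤ sn G (fun _ => 2) v := by
  have h1 : 2 ≤ (univ.erase v : Finset V).card := by
    rw [Finset.card_erase_of_mem (Finset.mem_univ v), Finset.card_univ]; omega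
  obtain ⟨Q, hQ, hQc⟩ := Finset.exists_subset_card_eq h1
  have := sn_sched G v Qᶜ (fun _ => 0) (fun _ => Q) (fun _ => hQc.le) (fun _ x hx => by simpa using hx)
    (by rw [Finset.mem_compl]; intro h; simpa using hQ h) rfl (by
      intro x _ y _
      by_cases hy : y ∈ Q
      · exact Or.inr ⟨0, le_rfl, hy⟩
      · exact Or.inl ⟨Finset.mem_compl.mpr hy, Nat.zero_le _⟩)
  have h2 := Finset.card_add_card_compl Q
  omega

lemma arith_small (n p : ℝ) (h3 : 3 ≤ n) (hp0 : 0 ≤ p) (hp : p ≤ n) (hpn : p + 1 ≤ n) :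
    p * (p + 3) / 4 ≤ 4 * p * n / 9 := by
  have : 0 ≤ p * (16 * n / 9 - p - 3) := mul_nonneg hp0 (by linarith)
  nlinarith

lemma arith_big (n p : ℝ) (h27 : 27 ≤ n) (hp : p ≤ n) (hr : 14 * n ≤ 45 * (p + 3)) :
    p * (p + 3) / 4 ≤ 4 * p * n / 9 - (n - p) * (n / 9 - 3) := by
  have h1 : 0 ≤ (p - (14 * n / 45 - 3)) * (n - p) := mul_nonneg (by linarith) (by linarith)
  nlinarith [mul_nonneg (show (0 : ℝ) ≤ n - 27 by linarith) (show (0 : ℝ) ≤ p - (14 * n / 45 - 3) by linarith),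
    mul_nonneg (show (0 : ℝ) ≤ n - 27 by linarith) (show (0 : ℝ) ≤ n - p by linarith)]

open Classical in
lemma main_sum {V : Type} [Fintype V] (G : SimpleGraph V) (hc : G.Connected) (N : ℕ) (φ : ℕ × ℕ → V) (b : V)
    (hφ : GridColoring G N φ b) (m : ℕ) (hm : ∑ x, (nb G univ x).card = 2 * m) (hmn : Fintype.card V ≤ m)
    (hm4 : 4 * m < 7 * Fintype.card V) (hn3 : 3 ≤ Fintype.card V) :
    (Fintype.card V : ℝ) * (Fintype.card V - 4 * m / 9) ≤ ∑ v : V, ((sn G (fun _ => 2) v : ℝ) + 1) := by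
  obtain ⟨H, par, top, rk, hP, h2, hs⟩ := exists_core G hc m hm hmn
  have hcard : H.card + Hᶜ.card = Fintype.card V := Finset.card_add_card_compl H
  have hdis := discharge hP
  have hloss := loss_sum hP
  have hpend := pend_sum hP
  have hHne : H.Nonempty := ⟨b |> top, hP.top_mem _⟩
  have hH1 : 1 ≤ H.card := hHne.card_pos
  set n := Fintype.card V with hn
  set p := Hᶜ.card with hp
  set d : V → ℕ := fun v => (nb G H v).card with hd
  set q : V → ℕ := fun v => (pend H top v).card with hq
  set f : V → ℝ := fun v => (sn G (fun _ => 2) v : ℝ) + 1 with hf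
  have f0 : ∀ v, 3 ≤ f v := by
    intro v
    have : (2 : ℝ) ≤ (sn G (fun _ => 2) v : ℝ) := by exact_mod_cast sn_two G v hn3
    simp only [hf]; linarith
  have fpend : ∀ v ∈ Hᶜ, (n : ℝ) - ((lossS H par v).card : ℝ) ≤ f v := by
    intro v hv
    have h : (n : ℝ) ≤ (sn G (fun _ => 2) v : ℝ) + (1 + ((lossS H par v).card : ℝ)) := by
      exact_mod_cast sn_pend hP v (Finset.mem_compl.mp hv)
    simp only [hf]; linarith
  have fd2 : ∀ v ∈ H, d v = 2 → (n : ℝ) - q v ≤ f v := by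
    intro v hv hd2
    have h : (n : ℝ) ≤ (sn G (fun _ => 2) v : ℝ) + (1 + (q v : ℝ)) := by
      exact_mod_cast sn_deg2 hP v hv hd2.le
    simp only [hf]; linarith
  have fd3 : ∀ v ∈ H, d v = 3 → (n : ℝ) / 3 - q v ≤ f v := by
    intro v hv hd3
    have h : (n : ℝ) ≤ 3 * (sn G (fun _ => 2) v : ℝ) + 1 + (q v : ℝ) := by
      exact_mod_cast sn_deg3 hP hc N φ b hφ v hv hd3.le
    have h0 : (0 : ℝ) ≤ q v := Nat.cast_nonneg _
    simp only [hf]; linarith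
  have fgood : ∀ v, Good G H v → (n : ℝ) - 4 - p ≤ f v := by
    intro v hg
    have h : (n : ℝ) ≤ (sn G (fun _ => 2) v : ℝ) + 5 + (p : ℝ) := by exact_mod_cast hg
    simp only [hf]; linarith
  have q0 : ∀ v, (0 : ℝ) ≤ q v := fun v => Nat.cast_nonneg _
  have n3 : (3 : ℝ) ≤ n := by exact_mod_cast hn3
  have hsR : ∑ x ∈ H, (d x : ℝ) + 2 * p = 2 * m := by exact_mod_cast hs
  have hcR : (H.card : ℝ) + p = n := by exact_mod_cast hcard
  have hqR : ∑ x ∈ H, (q x : ℝ) = p := by exact_mod_cast hpend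
  have hlR : 4 * ∑ v ∈ Hᶜ, ((lossS H par v).card : ℝ) + p ≤ p * p := by exact_mod_cast hloss
  have hm4R : 4 * (m : ℝ) ≤ 7 * n := by exact_mod_cast hm4.le
  have hp0 : (0 : ℝ) ≤ p := Nat.cast_nonneg _
  have hp1 : (p : ℝ) + 1 ≤ n := by
    have : (1 : ℝ) ≤ H.card := by exact_mod_cast hH1
    linarith
  have hsplit : ∑ v, f v = ∑ v ∈ H, f v + ∑ v ∈ Hᶜ, f v := (Finset.sum_add_sum_compl H f).symm
  have hpsum : (p : ℝ) * n - ∑ v ∈ Hᶜ, ((lossS H par v).card : ℝ) ≤ ∑ v ∈ Hᶜ, f v := by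
    have := Finset.sum_le_sum fpend
    rw [Finset.sum_sub_distrib, Finset.sum_const, nsmul_eq_mul] at this
    exact this
  set Λ : ℝ := ∑ v ∈ Hᶜ, ((lossS H par v).card : ℝ) with hΛ
  set D : ℝ := ∑ x ∈ H, (d x : ℝ) with hD
  have hΛp : Λ + p ≤ p * (p + 3) / 4 := by nlinarith
  -- it suffices to bound the core sum
  suffices hcore : (n : ℝ) * (H.card - 2 * D / 9) - 4 * p * n / 9 + Λ ≤ ∑ v ∈ H, f v by
    rw [hsplit]
    have e : (n : ℝ) * (n - 4 * m / 9) = n * (H.card - 2 * D / 9) + 5 * p * n / 9 := by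
      rw [show (m : ℝ) = (D + 2 * p) / 2 by linarith, ← hcR]; ring
    rw [e]; linarith
  have hge2 : ∀ v ∈ H, d v = 2 ∨ d v = 3 ∨ d v = 4 ∨ 5 ≤ d v := by
    intro v hv
    have := h2 v hv
    simp only [hd]; omega
  by_cases hr : 45 * ((p : ℝ) + 3) ≤ 14 * n
  · -- first regime
    have point : ∀ v ∈ H, (n : ℝ) * (1 - 2 * d v / 9) + n * (77 - 22 * d v) / 90 + n / 90 *
        ((if d v = 3 ∧ ¬ Good G H v then (-11 : ℝ) else 0) + (if d v = 4 then 1 else 0) +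
          (if 5 ≤ d v then 4 * (d v : ℝ) else 0)) - q v ≤ f v := by
      intro v hv
      have hq0 := q0 v
      have hf0 := f0 v
      rcases hge2 v hv with h | h | h | h
      · have := fd2 v hv h
        rw [if_neg (by omega), if_neg (by omega), if_neg (by omega), h]
        push_cast; linarith
      · by_cases hg : Good G H v
        · have := fgood v hg
          rw [if_neg (by tauto), if_neg (by omega), if_neg (by omega), h]
          push_cast; linarith
        · have := fd3 v hv h
          rw [if_pos ⟨h, hg⟩, if_neg (by omega), if_neg (by omega), h]
          push_cast; linarith
      · rw [if_neg (by omega), if_pos h, if_neg (by omega), h]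
        push_cast; linarith
      · rw [if_neg (by omega), if_neg (by omega), if_pos h]
        have h5 : (5 : ℝ) ≤ d v := by exact_mod_cast h
        nlinarith [mul_nonneg (show (0 : ℝ) ≤ n by linarith) (show (0 : ℝ) ≤ d v - 5 by linarith)]
    have hsum := Finset.sum_le_sum point
    have hE : (0 : ℝ) ≤ ∑ v ∈ H, ((if d v = 3 ∧ ¬ Good G H v then (-11 : ℝ) else 0) + (if d v = 4 then 1 else 0) +
          (if 5 ≤ d v then 4 * (d v : ℝ) else 0)) := by
      rw [Finset.sum_add_distrib, Finset.sum_add_distrib, ← Finset.sum_filter, ← Finset.sum_filter,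
        ← Finset.sum_filter, Finset.sum_const, Finset.sum_const, ← Finset.mul_sum, nsmul_eq_mul, nsmul_eq_mul]
      have hdR : 12 * (#{v ∈ H | d v = 3 ∧ ¬ Good G H v} : ℝ) ≤
        (#{v ∈ H | d v = 4} : ℝ) + 4 * ∑ x ∈ H with 5 ≤ d x, (d x : ℝ) := by exact_mod_cast hdis
      have : (0 : ℝ) ≤ (#{v ∈ H | d v = 3 ∧ ¬ Good G H v} : ℝ) := Nat.cast_nonneg _
      linarith
    have hL : ∑ v ∈ H, ((n : ℝ) * (1 - 2 * d v / 9) + n * (77 - 22 * d v) / 90 + n / 90 *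
        ((if d v = 3 ∧ ¬ Good G H v then (-11 : ℝ) else 0) + (if d v = 4 then 1 else 0) +
          (if 5 ≤ d v then 4 * (d v : ℝ) else 0)) - q v) =
        n * (H.card - 2 * D / 9) + n * (77 * H.card - 22 * D) / 90 + n / 90 *
        (∑ v ∈ H, ((if d v = 3 ∧ ¬ Good G H v then (-11 : ℝ) else 0) + (if d v = 4 then 1 else 0) +
          (if 5 ≤ d v then 4 * (d v : ℝ) else 0))) - p := by
      rw [Finset.sum_sub_distrib, hqR, Finset.sum_add_distrib, ← Finset.mul_sum, Finset.sum_add_distrib]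
      congr 3
      · rw [← Finset.mul_sum, Finset.sum_sub_distrib, ← Finset.sum_div, ← Finset.mul_sum]; simp [hD]
      · rw [← Finset.sum_div, ← Finset.mul_sum, Finset.sum_sub_distrib, ← Finset.mul_sum]; simp [hD]; ring_nf; simp
    rw [hL] at hsum
    have hE' := mul_nonneg (show (0 : ℝ) ≤ (n : ℝ) / 90 by positivity) hE
    have hX : (0 : ℝ) ≤ n * (77 * H.card - 22 * D + 33 * p) := mul_nonneg (by linarith) (by linarith)
    have hY : (0 : ℝ) ≤ p * (14 * n - 45 * (p + 3)) := mul_nonneg hp0 (by linarith)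
    nlinarith
  · -- second regime
    have hr' : 14 * (n : ℝ) ≤ 45 * ((p : ℝ) + 3) := by linarith
    have point : ∀ M : ℝ, 0 ≤ M → (n : ℝ) / 9 - 3 ≤ M → ∀ v ∈ H, (n : ℝ) * (1 - 2 * d v / 9) - M - q v ≤ f v := by
      intro M hM hM' v hv
      have hq0 := q0 v
      have hf0 := f0 v
      rcases hge2 v hv with h | h | h | h
      · have := fd2 v hv h
        rw [h]; push_cast; linarith
      · have := fd3 v hv h
        rw [h]; push_cast; linarith
      · rw [h]; push_cast; linarith
      · have h5 : (5 : ℝ) ≤ d v := by exact_mod_cast h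
        nlinarith [mul_nonneg (show (0 : ℝ) ≤ n by linarith) (show (0 : ℝ) ≤ d v - 5 by linarith)]
    have hsum : ∀ M : ℝ, 0 ≤ M → (n : ℝ) / 9 - 3 ≤ M →
        (n : ℝ) * (H.card - 2 * D / 9) - H.card * M - p ≤ ∑ v ∈ H, f v := by
      intro M hM hM'
      have := Finset.sum_le_sum (point M hM hM')
      rw [Finset.sum_sub_distrib, Finset.sum_sub_distrib, hqR, ← Finset.mul_sum, Finset.sum_sub_distrib,
        ← Finset.sum_div, ← Finset.mul_sum, Finset.sum_const, Finset.sum_const, nsmul_eq_mul, nsmul_eq_mul] at this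
      simpa using this
    by_cases h27 : (n : ℝ) ≤ 27
    · have h1 := hsum 0 le_rfl (by linarith)
      have h2 := arith_small n p n3 hp0 (by linarith) hp1
      linarith
    · have h1 := hsum ((n : ℝ) / 9 - 3) (by linarith) le_rfl
      have h2 := arith_big n p (by linarith) (by linarith) hr'
      have e : (H.card : ℝ) = n - p := by linarith
      rw [e] at h1 ⊢
      linarith

open Classical in
lemma handshake_nb {V : Type} [Fintype V] (G : SimpleGraph V) :
    ∑ x, (nb G univ x).card = 2 * Nat.card G.edgeSet := by
  rw [Nat.card_eq_fintype_card, ← SimpleGraph.edgeFinset_card,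
    ← SimpleGraph.sum_degrees_eq_twice_card_edges]
  refine Finset.sum_congr rfl fun x _ => ?_
  rw [← SimpleGraph.card_neighborFinset_eq_degree]
  congr 1
  ext y
  simp [mem_nb]

open Classical in
lemma nb_sum_le {V : Type} [Fintype V] (G : SimpleGraph V) :
    ∑ x, (nb G univ x).card ≤ Fintype.card V * (Fintype.card V - 1) := by
  refine (Finset.sum_le_card_nsmul _ _ (Fintype.card V - 1) fun x _ => ?_).trans (by simp)
  rw [← Finset.card_univ, ← Finset.card_erase_of_mem (Finset.mem_univ x)]
  refine Finset.card_le_card fun y hy => ?_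
  rw [mem_nb] at hy
  exact Finset.mem_erase.2 ⟨hy.2.ne', Finset.mem_univ y⟩

end Helpers

/-- Theorem 1.2 (case ε > 1): a connected planar graph with `n ≥ 2` vertices, `m` edges
and average degree `2m/n = 9/2 - ε` with `ε ∈ (1, 5/2]` has 2-surviving rate at least
`(2/9)ε - 1/n`. -/
theorem surviving_rate_two_of_avg_degree_small' {V : Type} [Fintype V] (G : SimpleGraph V)
    (hconn : G.Connected) (hplanar : IsPlanar G)
    (n m : ℕ) (hn : n = Fintype.card V) (hm : m = Nat.card G.edgeSet)
    (hn2 : 2 ≤ n) (ε : ℝ) (hε : ε ∈ Set.Ioc (1 : ℝ) (5 / 2))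
    (hdeg : (2 * m : ℝ) / n = 9 / 2 - ε) :
    survivingRate G (fun _ => 2) ≥ 2 / 9 * ε - 1 / n := by
  have hnpos : (0 : ℝ) < n := by
    have : 0 < n := by omega
    exact_mod_cast this
  have hh := handshake_nb G
  rw [← hm] at hh
  obtain ⟨h1, h2⟩ := hε
  have hd : (2 * m : ℝ) = (9 / 2 - ε) * n := by
    rw [← hdeg]; field_simp
  have hnm : n ≤ m := by
    have : (n : ℝ) ≤ m := by nlinarith
    exact_mod_cast this
  have hm4 : 4 * m < 7 * n := by
    have : (4 * m : ℝ) < 7 * n := by nlinarith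
    exact_mod_cast this
  have hn3 : 3 ≤ n := by
    by_contra hlt
    have hn' : n = 2 := by omega
    have hle := nb_sum_le G
    rw [hh, ← hn, hn'] at hle
    omega
  obtain ⟨N, φ, b, hφ⟩ := grid_of_planar G hconn.nonempty hplanar
  have key := main_sum G hconn N φ b hφ m hh (hn ▸ hnm) (hn ▸ hm4) (hn ▸ hn3)
  rw [Finset.sum_add_distrib] at key
  simp only [Finset.sum_const, Finset.card_univ, nsmul_eq_mul, mul_one] at key
  unfold survivingRate
  rw [← hn] at key ⊢
  rw [ge_iff_le, le_div_iff₀ (by positivity)]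
  have e : (2 / 9 * ε - 1 / (n : ℝ)) * (n : ℝ) ^ 2 = n * (n - 4 * m / 9) - n := by
    have : (4 * m / 9 : ℝ) = 2 / 9 * ((9 / 2 - ε) * n) := by rw [← hd]; ring
    rw [this]; field_simp; ring
  rw [e]; linarith
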